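/- arXiv:2411.07266 — 10 statements merged into one kernel-verified Lean document; each statement's English description precedes it below -/
import Mathlib

section
/- Let G and H be finite simple graphs such that γ_MR(G) ≥ 0 and γ_MR(H) ≥ 0. Then γ_MR(G ∨ H) ≤ γ_MR(G) + γ_MR(H), where G ∨ H denotes the join of G and H. -/
open Finset

namespace MRD

variable {V : Type*}

open scoped Classical

/-- Sum of `f` over the closed neighborhood of `v` in `G`:
`f(N[v]) = \sum_{u \in N[v]} f(u)`. -/
noncomputable def closedNbhdSum [Fintype V] (G : SimpleGraph V) (f : V → ℤ) (v : V) : ℤ :=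
  ∑ u ∈ Finset.univ.filter (fun u => G.Adj v u ∨ u = v), f u

/-- `f : V → {-1, 1, 2}` is a Majority Roman Dominating Function (MRDF) on `G`:
(i) `f(N[v]) ≥ 1` for at least half of the vertices, and (ii) every vertex with value `-1`
is adjacent to a vertex with value `2`. -/
noncomputable def IsMRDF [Fintype V] (G : SimpleGraph V) (f : V → ℤ) : Prop :=
  (∀ v, f v = -1 ∨ f v = 1 ∨ f v = 2) ∧
  Fintype.card V ≤ 2 * (Finset.univ.filter (fun v => 1 ≤ closedNbhdSum G f v)).card ∧
  (∀ u, f u = -1 → ∃ w, G.Adj u w ∧ f w = 2)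

/-- The majority Roman domination number `γ_MR(G)`: the minimum weight
`w(f) = ∑_v f(v)` over all MRDFs `f` on `G`. -/
noncomputable def mrdNum [Fintype V] (G : SimpleGraph V) : ℤ :=
  sInf {w : ℤ | ∃ f : V → ℤ, IsMRDF G f ∧ w = ∑ v, f v}

/-- The join `G ∨ H` of two simple graphs: disjoint union plus all edges between the parts. -/
def join {α β : Type*} (G : SimpleGraph α) (H : SimpleGraph β) : SimpleGraph (α ⊕ β) where
  Adj x y :=
    match x, y with
    | .inl a, .inl b => G.Adj a b
    | .inr a, .inr b => H.Adj a b
    | .inl _, .inr _ => True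
    | .inr _, .inl _ => True
  symm := ⟨by rintro (a | a) (b | b) h <;> simp_all [SimpleGraph.adj_comm]⟩
  loopless := ⟨by rintro (a | a) h <;> simp_all⟩

/-- The corona `G ∘ H` of two simple graphs: one copy of `G` and `|V(G)|` copies of `H`,
where the `v`-th vertex of `G` is joined to every vertex of the `v`-th copy of `H`. -/
def corona {α β : Type*} (G : SimpleGraph α) (H : SimpleGraph β) : SimpleGraph (α ⊕ α × β) where
  Adj x y :=
    match x, y with
    | .inl u, .inl v => G.Adj u v
    | .inr p, .inr q => p.1 = q.1 ∧ H.Adj p.2 q.2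
    | .inl u, .inr p => u = p.1
    | .inr p, .inl u => u = p.1
  symm := ⟨by
    rintro (u | ⟨u, x⟩) (v | ⟨v, y⟩) h <;> simp_all [SimpleGraph.adj_comm, eq_comm]⟩
  loopless := ⟨by rintro (u | ⟨u, x⟩) h <;> simp_all⟩

/-- `S` is a dominating set of `G`. -/
def IsDomSet (G : SimpleGraph V) (S : Finset V) : Prop :=
  ∀ v, v ∉ S → ∃ u ∈ S, G.Adj v u

/-- The domination number `γ(G)`. -/
noncomputable def domNum [Fintype V] (G : SimpleGraph V) : ℕ :=
  sInf {k | ∃ S : Finset V, IsDomSet G S ∧ S.card = k}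

/-- A set of vertices is independent if no two of its vertices are adjacent. -/
def IsIndepSet (G : SimpleGraph V) (S : Finset V) : Prop :=
  ∀ a ∈ S, ∀ b ∈ S, ¬ G.Adj a b

/-- The independence number `β₀(G)`. -/
noncomputable def indepNum [Fintype V] (G : SimpleGraph V) : ℕ :=
  sSup {k | ∃ S : Finset V, IsIndepSet G S ∧ S.card = k}

/-- The cocktail party graph `K_{2n} - M` (complete graph minus a perfect matching),
realized on `Fin n × Fin 2`: `(i,a)` and `(j,b)` are adjacent iff `i ≠ j`. -/
def cocktail (n : ℕ) : SimpleGraph (Fin n × Fin 2) where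
  Adj x y := x.1 ≠ y.1
  symm := ⟨fun _ _ h => h.symm⟩
  loopless := ⟨fun _ h => h rfl⟩

end MRD

namespace MRD

open scoped Classical

theorem bddBelow_aux {V : Type*} [Fintype V] (G : SimpleGraph V) :
    BddBelow {w : ℤ | ∃ f : V → ℤ, IsMRDF G f ∧ w = ∑ v, f v} := by
  refine ⟨∑ _v : V, (-1 : ℤ), ?_⟩
  rintro w ⟨f, hf, rfl⟩
  apply Finset.sum_le_sum
  intro v _
  rcases hf.1 v with h | h | h <;> omega

theorem exists_opt {V : Type*} [Fintype V] (G : SimpleGraph V) :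
    ∃ f : V → ℤ, IsMRDF G f ∧ mrdNum G = ∑ v, f v := by
  have hne : {w : ℤ | ∃ f : V → ℤ, IsMRDF G f ∧ w = ∑ v, f v}.Nonempty := by
    refine ⟨_, fun _ => 1, ⟨fun _ => Or.inr (Or.inl rfl), ?_, ?_⟩, rfl⟩
    · have : (Finset.univ.filter (fun v => 1 ≤ closedNbhdSum G (fun _ => 1) v)) = Finset.univ := by
        apply Finset.filter_true_of_mem
        intro v _
        unfold closedNbhdSum
        have : 0 < (Finset.univ.filter (fun u => G.Adj v u ∨ u = v)).card :=
          Finset.card_pos.mpr ⟨v, by simp⟩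
        simp only [Finset.sum_const, nsmul_eq_mul, mul_one]
        omega
      rw [this, Finset.card_univ]
      omega
    · intro u hu
      norm_num at hu
  exact Int.csInf_mem hne (bddBelow_aux G)

theorem sum_inl {α β : Type*} [Fintype α] [Fintype β]
    (G : SimpleGraph α) (H : SimpleGraph β) (f : α → ℤ) (g : β → ℤ) (a : α) :
    closedNbhdSum (join G H) (Sum.elim f g) (Sum.inl a) = closedNbhdSum G f a + ∑ b, g b := by
  unfold closedNbhdSum
  rw [Finset.sum_filter, Fintype.sum_sum_type, Finset.sum_filter]
  simp [join]

theorem sum_inr {α β : Type*} [Fintype α] [Fintype β]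
    (G : SimpleGraph α) (H : SimpleGraph β) (f : α → ℤ) (g : β → ℤ) (b : β) :
    closedNbhdSum (join G H) (Sum.elim f g) (Sum.inr b) = ∑ a, f a + closedNbhdSum H g b := by
  unfold closedNbhdSum
  rw [Finset.sum_filter, Fintype.sum_sum_type, Finset.sum_filter]
  simp [join]

theorem isMRDF_join {α β : Type*} [Fintype α] [Fintype β]
    (G : SimpleGraph α) (H : SimpleGraph β) (f : α → ℤ) (g : β → ℤ)
    (hf : IsMRDF G f) (hg : IsMRDF H g) (hf0 : 0 ≤ ∑ a, f a) (hg0 : 0 ≤ ∑ b, g b) :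
    IsMRDF (join G H) (Sum.elim f g) := by
  refine ⟨?_, ?_, ?_⟩
  · rintro (a | b)
    · exact hf.1 a
    · exact hg.1 b
  · have h1 := hf.2.1
    have h2 := hg.2.1
    have hsub : (Finset.univ.filter (fun v => 1 ≤ closedNbhdSum G f v)).disjSum
        (Finset.univ.filter (fun v => 1 ≤ closedNbhdSum H g v)) ⊆
        Finset.univ.filter (fun v => 1 ≤ closedNbhdSum (join G H) (Sum.elim f g) v) := by
      rintro (a | b) h
      · simp only [Finset.inl_mem_disjSum, Finset.mem_filter, Finset.mem_univ, true_and] at h ⊢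
        rw [sum_inl]; omega
      · simp only [Finset.inr_mem_disjSum, Finset.mem_filter, Finset.mem_univ, true_and] at h ⊢
        rw [sum_inr]; omega
    have h3 := Finset.card_le_card hsub
    rw [Finset.card_disjSum] at h3
    rw [Fintype.card_sum]
    omega
  · rintro (a | b) h
    · obtain ⟨w, hw, hw2⟩ := hf.2.2 a h
      exact ⟨Sum.inl w, hw, hw2⟩
    · obtain ⟨w, hw, hw2⟩ := hg.2.2 b h
      exact ⟨Sum.inr w, hw, hw2⟩

end MRD

/-- If `γ_MR(G) ≥ 0` and `γ_MR(H) ≥ 0`, then `γ_MR(G ∨ H) ≤ γ_MR(G) + γ_MR(H)`. -/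
theorem mrdNum_join_le {α β : Type*} [Fintype α] [Fintype β]
    (G : SimpleGraph α) (H : SimpleGraph β)
    (hG : 0 ≤ MRD.mrdNum G) (hH : 0 ≤ MRD.mrdNum H) :
    MRD.mrdNum (MRD.join G H) ≤ MRD.mrdNum G + MRD.mrdNum H := by
  obtain ⟨f, hf, hfe⟩ := MRD.exists_opt G
  obtain ⟨g, hg, hge⟩ := MRD.exists_opt H
  rw [hfe] at hG ⊢
  rw [hge] at hH ⊢
  exact csInf_le (MRD.bddBelow_aux _)
    ⟨Sum.elim f g, MRD.isMRDF_join G H f g hf hg hG hH, by simp [Fintype.sum_sum_type]⟩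
end

section
/- For every n ≥ 4, the fan F_n = K_1 ∨ P_{n-1} on n vertices satisfies γ_MR(F_n) = 2⌈n/6⌉ − n + 3. -/
open Finset

namespace MRDFan

open scoped Classical

/-- Shifted extension by zero of a function on the path vertices. -/
noncomputable def ext {m : ℕ} (f : Fin 1 ⊕ Fin m → ℤ) (k : ℕ) : ℤ :=
  if h : 1 ≤ k ∧ k ≤ m then f (Sum.inr ⟨k - 1, by omega⟩) else 0

lemma ext_succ {m : ℕ} (f : Fin 1 ⊕ Fin m → ℤ) (j : Fin m) :
    ext f (j + 1) = f (Sum.inr j) := by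
  have := j.2
  unfold ext
  rw [dif_pos (by omega)]
  congr

lemma ext_zero {m : ℕ} (f : Fin 1 ⊕ Fin m → ℤ) : ext f 0 = 0 := by simp [ext]

lemma ext_last {m : ℕ} (f : Fin 1 ⊕ Fin m → ℤ) : ext f (m + 1) = 0 := by simp [ext]

abbrev G (m : ℕ) : SimpleGraph (Fin 1 ⊕ Fin m) :=
  MRD.join (⊤ : SimpleGraph (Fin 1)) (SimpleGraph.pathGraph m)

lemma weight_eq {m : ℕ} (f : Fin 1 ⊕ Fin m → ℤ) :
    ∑ v, f v = f (Sum.inl 0) + ∑ i ∈ range m, ext f (i + 1) := by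
  rw [Fintype.sum_sum_type, ← Fin.sum_univ_eq_sum_range (fun i => ext f (i + 1)) m]
  simp [ext_succ]

lemma hub_sum {m : ℕ} (f : Fin 1 ⊕ Fin m → ℤ) :
    MRD.closedNbhdSum (G m) f (Sum.inl 0) = ∑ v, f v := by
  unfold MRD.closedNbhdSum
  congr 1
  ext v
  rcases v with a | a
  · simp [Subsingleton.elim a 0]
  · simp [G, MRD.join]

lemma path_sum {m : ℕ} (f : Fin 1 ⊕ Fin m → ℤ) (i : Fin m) :
    MRD.closedNbhdSum (G m) f (Sum.inr i) =
      f (Sum.inl 0) + (ext f i + ext f (i + 1) + ext f (i + 2)) := by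
  unfold MRD.closedNbhdSum
  rw [Finset.sum_filter, Fintype.sum_sum_type]
  have h1 : ∀ (j : Fin m) (d : Decidable ((G m).Adj (Sum.inr i) (Sum.inr j) ∨
      (Sum.inr j : Fin 1 ⊕ Fin m) = Sum.inr i)), (@ite _ _ d (f (Sum.inr j)) 0) =
      (fun j : ℕ => (if j = (i : ℕ) + 1 then ext f (j + 1) else 0) +
        (if j = (i : ℕ) - 1 then (if (i : ℕ) = 0 then 0 else ext f (j + 1)) else 0) +
        (if j = (i : ℕ) then ext f (j + 1) else 0)) (j : ℕ) := by
    intro j d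
    have h2 : ((G m).Adj (Sum.inr i) (Sum.inr j) ∨
      (Sum.inr j : Fin 1 ⊕ Fin m) = Sum.inr i) ↔
        ((i : ℕ) + 1 = j ∨ (j : ℕ) + 1 = i ∨ (j : ℕ) = i) := by
      simp [G, MRD.join, SimpleGraph.pathGraph_adj, Fin.ext_iff, or_assoc]
    simp only [h2, ← ext_succ f j]
    split_ifs <;> first | omega | simp
  refine (congrArg₂ (· + ·) rfl ((Finset.sum_congr rfl (fun j _ => h1 j _)).trans
    (Fin.sum_univ_eq_sum_range (fun j : ℕ => (if j = (i : ℕ) + 1 then ext f (j + 1) else 0) +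
        (if j = (i : ℕ) - 1 then (if (i : ℕ) = 0 then 0 else ext f (j + 1)) else 0) +
        (if j = (i : ℕ) then ext f (j + 1) else 0)) m))).trans ?_
  have hi := i.2
  simp only [Finset.sum_add_distrib, Finset.sum_ite_eq', Finset.mem_range]
  have h3 : (if (i : ℕ) + 1 < m then ext f (i + 1 + 1) else 0) = ext f (i + 2) := by
    split_ifs with h
    · rfl
    · have : (i : ℕ) + 2 = m + 1 := by omega
      rw [this, ext_last]
  have h4 : (if (i : ℕ) - 1 < m then (if (i : ℕ) = 0 then 0 else ext f ((i : ℕ) - 1 + 1)) else 0)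
      = ext f i := by
    rw [if_pos (by omega)]
    split_ifs with h
    · rw [h, ext_zero]
    · congr 1; omega
  rw [h3, h4, if_pos hi]
  simp [G, MRD.join]
  ring

lemma good_card {m : ℕ} (f : Fin 1 ⊕ Fin m → ℤ) :
    (Finset.univ.filter (fun v => 1 ≤ MRD.closedNbhdSum (G m) f v)).card =
      (if 1 ≤ ∑ v, f v then 1 else 0) +
      ((range m).filter (fun i => 1 ≤ f (Sum.inl 0) +
        (ext f i + ext f (i + 1) + ext f (i + 2)))).card := by
  rw [Finset.card_filter, Finset.card_filter, Fintype.sum_sum_type,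
    ← Fin.sum_univ_eq_sum_range (fun i => if 1 ≤ f (Sum.inl 0) +
        (ext f i + ext f (i + 1) + ext f (i + 2)) then 1 else 0) m]
  simp only [path_sum, Finset.univ_unique, Finset.sum_singleton]
  have : (default : Fin 1) = 0 := rfl
  rw [this, hub_sum]

lemma shift_down (t : ℕ → ℤ) (m : ℕ) (h0 : t 0 = 0) (hm : 0 ≤ t m) :
    ∑ i ∈ range m, t i ≤ ∑ i ∈ range m, t (i + 1) := by
  have h1 := Finset.sum_range_succ t m
  have h2 := Finset.sum_range_succ' t m
  linarith

lemma shift_up (t : ℕ → ℤ) (m : ℕ) (h0 : 0 ≤ t 1) (hm : t (m + 1) = 0) :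
    ∑ i ∈ range m, t (i + 2) ≤ ∑ i ∈ range m, t (i + 1) := by
  have h1 := Finset.sum_range_succ (fun i => t (i + 1)) m
  have h2 := Finset.sum_range_succ' (fun i => t (i + 1)) m
  simp only [zero_add, add_assoc, Nat.reduceAdd] at h1 h2
  linarith

/-- lower bound when the hub has value different from 2 -/
lemma roman_nonneg (F : ℕ → ℤ) (m : ℕ) (hm2 : 2 ≤ m) (h0 : F 0 = 0) (hm : F (m + 1) = 0)
    (hF : ∀ i < m, F (i + 1) = -1 ∨ F (i + 1) = 1 ∨ F (i + 1) = 2)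
    (hR : ∀ i < m, F (i + 1) = -1 → F i = 2 ∨ F (i + 2) = 2) :
    0 ≤ ∑ i ∈ range m, F (i + 1) ∧
    ((∃ i < m, 2 ≤ F i + F (i + 1) + F (i + 2)) → 1 ≤ ∑ i ∈ range m, F (i + 1)) := by
  set t : ℕ → ℤ := fun i => if F i = 2 then 1 else 0 with ht
  have tn : ∀ i, 0 ≤ t i := fun i => by simp only [ht]; split_ifs <;> simp
  have d1 := shift_down t m (by simp [ht, h0]) (tn _)
  have d2 := shift_up t m (tn _) (by simp [ht, hm])
  set g : ℕ → ℤ := fun i => F (i + 1) - 2 * t (i + 1) + t i + t (i + 2) with hg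
  have gs : ∑ i ∈ range m, g i ≤ ∑ i ∈ range m, F (i + 1) := by
    simp only [hg, Finset.sum_add_distrib, Finset.sum_sub_distrib, ← Finset.mul_sum]
    linarith
  have gn : ∀ i ∈ range m, 0 ≤ g i := by
    intro i hi
    have hi := Finset.mem_range.1 hi
    have a := tn i
    have b := tn (i + 2)
    simp only [hg]
    rcases hF i hi with h | h | h
    · rcases hR i hi h with h' | h'
      · have : t i = 1 := by simp [ht, h']
        have : t (i + 1) = 0 := by simp [ht, h]
        linarith
      · have : t (i + 2) = 1 := by simp [ht, h']
        have : t (i + 1) = 0 := by simp [ht, h]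
        linarith
    · have : t (i + 1) = 0 := by simp [ht, h]
      linarith
    · have : t (i + 1) = 1 := by simp [ht, h]
      linarith
  refine ⟨(Finset.sum_nonneg gn).trans gs, ?_⟩
  rintro ⟨i, hi, hs⟩
  suffices ∃ j ∈ range m, 1 ≤ g j by
    obtain ⟨j, hj, hj1⟩ := this
    exact (hj1.trans (Finset.single_le_sum gn hj)).trans gs
  have one : ∀ j < m, F (j + 1) = 1 → ∃ j ∈ range m, 1 ≤ g j := by
    intro j hj h
    refine ⟨j, Finset.mem_range.2 hj, ?_⟩
    have : t (j + 1) = 0 := by simp [ht, h]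
    have a := tn j
    have b := tn (j + 2)
    simp only [hg]; linarith
  have hval : ∀ j ≤ m + 1, (F j = 0 ∧ (j = 0 ∨ j = m + 1)) ∨ F j = -1 ∨ F j = 2 ∨ F j = 1 := by
    intro j hj
    rcases Nat.eq_zero_or_pos j with h | h
    · left; simp [h, h0]
    · obtain ⟨k, rfl⟩ : ∃ k, j = k + 1 := ⟨j - 1, by omega⟩
      by_cases hk : k < m
      · rcases hF k hk with h | h | h <;> simp [h]
      · left
        have : k = m := by omega
        simp [this, hm]
  have hone : ∀ j ≤ m + 1, F j = 1 → ∃ j ∈ range m, 1 ≤ g j := by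
    intro j hj h
    rcases Nat.eq_zero_or_pos j with h' | h'
    · rw [h', h0] at h; norm_num at h
    · obtain ⟨k, rfl⟩ : ∃ k, j = k + 1 := ⟨j - 1, by omega⟩
      by_cases hk : k < m
      · exact one k hk h
      · have : k = m := by omega
        rw [this, hm] at h; norm_num at h
  by_cases c0 : F i = 1
  · exact hone i (by omega) c0
  by_cases c2 : F (i + 2) = 1
  · exact hone (i + 2) (by omega) c2
  by_cases c1 : F (i + 1) = 1
  · exact one i hi c1
  have e0 := hval i (by omega)
  have e2 := hval (i + 2) (by omega)
  have e1 := hF i hi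
  by_cases h1 : F (i + 1) = 2
  · refine ⟨i, Finset.mem_range.2 hi, ?_⟩
    have a := tn i
    have b := tn (i + 2)
    have c : t (i + 1) = 1 := by simp [ht, h1]
    by_cases x : F i = 2
    · have : t i = 1 := by simp [ht, x]
      simp only [hg]; linarith
    by_cases y : F (i + 2) = 2
    · have : t (i + 2) = 1 := by simp [ht, y]
      simp only [hg]; linarith
    omega
  · have h2 : F (i + 1) = -1 := by omega
    refine ⟨i, Finset.mem_range.2 hi, ?_⟩
    have a : t i = 1 := by
      have : F i = 2 := by omega
      simp [ht, this]
    have b : t (i + 2) = 1 := by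
      have : F (i + 2) = 2 := by omega
      simp [ht, this]
    have c : t (i + 1) = 0 := by simp [ht, h2]
    simp only [hg]; linarith

/-- lower bound when the hub has value 2 -/
lemma hub_two (F : ℕ → ℤ) (m : ℕ) (hm2 : 2 ≤ m) (h0 : F 0 = 0) (hm : F (m + 1) = 0)
    (hF : ∀ i < m, F (i + 1) = -1 ∨ F (i + 1) = 1 ∨ F (i + 1) = 2) :
    ∃ k : ℕ, ((range m).filter (fun i => 1 ≤ 2 + (F i + F (i + 1) + F (i + 2)))).card ≤ 3 * k ∧
      2 * (k : ℤ) - m ≤ ∑ i ∈ range m, F (i + 1) := by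
  set t : ℕ → ℤ := fun i => if 1 ≤ F i then 1 else 0 with ht
  have tn : ∀ i, 0 ≤ t i := fun i => by simp only [ht]; split_ifs <;> simp
  have d1 := shift_down t m (by simp [ht, h0]) (tn _)
  have d2 := shift_up t m (tn _) (by simp [ht, hm])
  have hval : ∀ j ≤ m + 1, (F j = 0 ∧ (j = 0 ∨ j = m + 1)) ∨ F j = -1 ∨ F j = 2 ∨ F j = 1 := by
    intro j hj
    rcases Nat.eq_zero_or_pos j with h | h
    · left; simp [h, h0]
    · obtain ⟨k, rfl⟩ : ∃ k, j = k + 1 := ⟨j - 1, by omega⟩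
      by_cases hk : k < m
      · rcases hF k hk with h | h | h <;> simp [h]
      · left
        have : k = m := by omega
        simp [this, hm]
  refine ⟨((range m).filter (fun i => 1 ≤ F (i + 1))).card, ?_, ?_⟩
  · zify
    have e : (((range m).filter (fun i => 1 ≤ F (i + 1))).card : ℤ)
        = ∑ i ∈ range m, t (i + 1) := by
      rw [Finset.card_filter]; push_cast; rfl
    have e2 : (((range m).filter (fun i => 1 ≤ 2 + (F i + F (i + 1) + F (i + 2)))).card : ℤ)
        ≤ ∑ i ∈ range m, (t i + t (i + 1) + t (i + 2)) := by
      rw [Finset.card_filter]; push_cast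
      refine Finset.sum_le_sum fun i hi => ?_
      have hi := Finset.mem_range.1 hi
      have e0 := hval i (by omega)
      have e2 := hval (i + 2) (by omega)
      have e1 := hF i hi
      simp only [ht]
      split_ifs <;> omega
    simp only [Finset.sum_add_distrib] at e2
    linarith
  · rw [Finset.card_filter]
    push_cast
    have : (m : ℤ) = ∑ i ∈ range m, 1 := by simp
    rw [this, Finset.mul_sum, ← Finset.sum_sub_distrib]
    refine Finset.sum_le_sum fun i hi => ?_
    have e1 := hF i (Finset.mem_range.1 hi)
    split_ifs <;> omega

lemma lower {m : ℕ} (hm : 3 ≤ m) (f : Fin 1 ⊕ Fin m → ℤ) (hf : MRD.IsMRDF (G m) f) :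
    2 * (((m + 6) / 6 : ℕ) : ℤ) - m + 2 ≤ ∑ v, f v := by
  obtain ⟨h1, h2, h3⟩ := hf
  rw [good_card] at h2
  have hc : Fintype.card (Fin 1 ⊕ Fin m) = m + 1 := by simp [add_comm]
  rw [hc] at h2
  by_cases hw : 1 ≤ ∑ v, f v
  · omega
  rw [if_neg hw, zero_add] at h2
  rw [weight_eq] at hw ⊢
  have hF : ∀ i < m, ext f (i + 1) = -1 ∨ ext f (i + 1) = 1 ∨ ext f (i + 1) = 2 := by
    intro i hi
    rw [show i = ((⟨i, hi⟩ : Fin m) : ℕ) from rfl, ext_succ]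
    exact h1 _
  have z0 := ext_zero f
  have zm := ext_last f
  by_cases hub : f (Sum.inl 0) = 2
  · rw [hub] at h2 ⊢
    obtain ⟨k, k1, k2⟩ := hub_two (ext f) m (by omega) z0 zm hF
    omega
  have hR : ∀ i < m, ext f (i + 1) = -1 → ext f i = 2 ∨ ext f (i + 2) = 2 := by
    intro i hi h
    rw [show i = ((⟨i, hi⟩ : Fin m) : ℕ) from rfl, ext_succ] at h
    obtain ⟨w, hw1, hw2⟩ := h3 _ h
    rcases w with a | a
    · rw [Subsingleton.elim a 0] at hw2; exact absurd hw2 hub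
    · have : i + 1 = a ∨ (a : ℕ) + 1 = i := by
        simpa [G, MRD.join, SimpleGraph.pathGraph_adj] using hw1
      rw [← ext_succ f a] at hw2
      rcases this with h | h
      · right; rw [← hw2, ← h]
      · left; rw [← hw2, h]
  obtain ⟨r1, r2⟩ := roman_nonneg (ext f) m (by omega) z0 zm hF hR
  rcases h1 (Sum.inl 0) with h | h | h
  · rw [h] at h2 hw ⊢
    have hex : ∃ i < m, 2 ≤ ext f i + ext f (i + 1) + ext f (i + 2) := by
      have : 0 < ((range m).filter (fun i => 1 ≤ (-1 : ℤ) +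
        (ext f i + ext f (i + 1) + ext f (i + 2)))).card := by omega
      obtain ⟨i, hi⟩ := Finset.card_pos.1 this
      rw [Finset.mem_filter, Finset.mem_range] at hi
      exact ⟨i, hi.1, by omega⟩
    have := r2 hex
    by_cases h4 : m = 3
    · subst h4
      exfalso
      rw [Finset.card_filter] at h2
      simp only [Finset.sum_range_succ, Finset.sum_range_zero] at h2 hw this
      have a0 := hF 0 (by omega)
      have a1 := hF 1 (by omega)
      have a2 := hF 2 (by omega)
      simp only [zero_add, Nat.reduceAdd, z0] at *
      split_ifs at h2 <;> omega
    · omega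
  · omega
  · exact absurd h hub

/-- the extremal function -/
def opt (m k : ℕ) : Fin 1 ⊕ Fin m → ℤ
  | Sum.inl _ => 2
  | Sum.inr i => if (i : ℕ) % 3 = 1 ∧ (i : ℕ) < 3 * k then 1 else -1

lemma ext_opt (m k i : ℕ) (hi : i < m) :
    ext (opt m k) (i + 1) = if i % 3 = 1 ∧ i < 3 * k then 1 else -1 := by
  rw [show i = ((⟨i, hi⟩ : Fin m) : ℕ) from rfl, ext_succ]
  rfl

lemma upper {m : ℕ} (hm : 3 ≤ m) :
    MRD.IsMRDF (G m) (opt m ((m + 6) / 6)) ∧ ∑ v, opt m ((m + 6) / 6) v ≤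
      2 * (((m + 6) / 6 : ℕ) : ℤ) - m + 2 := by
  set k := (m + 6) / 6 with hk
  have hub : opt m k (Sum.inl 0) = 2 := rfl
  refine ⟨⟨?_, ?_, ?_⟩, ?_⟩
  · rintro (a | a)
    · simp [opt]
    · simp only [opt]; split_ifs <;> simp
  · rw [good_card, hub]
    have hc : Fintype.card (Fin 1 ⊕ Fin m) = m + 1 := by simp [add_comm]
    rw [hc]
    have hsub : range (min (3 * k) m) ⊆ (range m).filter (fun i => 1 ≤ (2 : ℤ) +
        (ext (opt m k) i + ext (opt m k) (i + 1) + ext (opt m k) (i + 2))) := by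
      intro i hi
      rw [Finset.mem_range] at hi
      rw [Finset.mem_filter, Finset.mem_range]
      refine ⟨by omega, ?_⟩
      have lb : ∀ j, -1 ≤ ext (opt m k) j := by
        intro j
        unfold ext
        split_ifs
        · simp only [opt]; split_ifs <;> simp
        · simp
      have b0 := lb i
      have b1 := lb (i + 1)
      have b2 := lb (i + 2)
      have hc : i % 3 = 0 ∨ i % 3 = 1 ∨ i % 3 = 2 := by omega
      rcases hc with h | h | h
      · have := ext_opt m k (i + 1) (by omega)
        rw [if_pos (by omega)] at this
        simp only [add_assoc, Nat.reduceAdd] at this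
        omega
      · have := ext_opt m k i (by omega)
        rw [if_pos (by omega)] at this
        omega
      · have := ext_opt m k (i - 1) (by omega)
        rw [if_pos (by omega), Nat.sub_add_cancel (by omega)] at this
        omega
    have := Finset.card_le_card hsub
    rw [Finset.card_range] at this
    omega
  · rintro (a | a) h
    · simp [opt] at h
    · exact ⟨Sum.inl 0, by simp [G, MRD.join], rfl⟩
  · rw [weight_eq, hub]
    have h1 : ∑ i ∈ range m, ext (opt m k) (i + 1) =
        2 * (((range m).filter (fun i => i % 3 = 1 ∧ i < 3 * k)).card : ℤ) - m := by
      rw [Finset.card_filter]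
      push_cast
      have : (m : ℤ) = ∑ i ∈ range m, 1 := by simp
      rw [this, Finset.mul_sum, ← Finset.sum_sub_distrib]
      refine Finset.sum_congr rfl fun i hi => ?_
      rw [ext_opt m k i (Finset.mem_range.1 hi)]
      split_ifs <;> norm_num
    have h2 : ((range m).filter (fun i => i % 3 = 1 ∧ i < 3 * k)).card ≤ k := by
      have : (range m).filter (fun i => i % 3 = 1 ∧ i < 3 * k) ⊆
          (range k).image (fun j => 3 * j + 1) := by
        intro i hi
        simp only [Finset.mem_filter, Finset.mem_range, Finset.mem_image] at hi ⊢
        exact ⟨i / 3, by omega, by omega⟩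
      exact (Finset.card_le_card this).trans (Finset.card_image_le.trans (by simp))
    rw [h1]
    omega

lemma ceil_eq (m : ℕ) : ⌈((m + 1 : ℕ) : ℚ) / 6⌉ = (((m + 6) / 6 : ℕ) : ℤ) := by
  rw [Int.ceil_eq_iff]
  have h1 : m + 1 ≤ 6 * ((m + 6) / 6) := by omega
  have h2 : 6 * ((m + 6) / 6) < m + 1 + 6 := by omega
  have h1' : ((m + 1 : ℕ) : ℚ) ≤ 6 * (((m + 6) / 6 : ℕ) : ℚ) := by exact_mod_cast h1
  have h2' : 6 * (((m + 6) / 6 : ℕ) : ℚ) < ((m + 1 : ℕ) : ℚ) + 6 := by exact_mod_cast h2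
  rw [Int.cast_natCast]
  constructor <;> linarith

end MRDFan

/-- For `n ≥ 4`, the fan `F_n = K_1 ∨ P_{n-1}` satisfies
`γ_MR(F_n) = 2⌈n/6⌉ - n + 3`. -/
theorem mrdNum_fan (n : ℕ) (hn : 4 ≤ n) :
    MRD.mrdNum (MRD.join (⊤ : SimpleGraph (Fin 1)) (SimpleGraph.pathGraph (n - 1))) =
      2 * ⌈(n : ℚ) / 6⌉ - n + 3 := by
  obtain ⟨m, rfl⟩ : ∃ m, n = m + 1 := ⟨n - 1, by omega⟩
  rw [MRDFan.ceil_eq, Nat.add_sub_cancel]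
  have hm : 3 ≤ m := by omega
  have hl : ∀ w ∈ {w : ℤ | ∃ f : Fin 1 ⊕ Fin m → ℤ, MRD.IsMRDF (MRDFan.G m) f ∧ w = ∑ v, f v},
      2 * (((m + 6) / 6 : ℕ) : ℤ) - ((m + 1 : ℕ) : ℤ) + 3 ≤ w := by
    rintro w ⟨f, hf, rfl⟩
    have := MRDFan.lower hm f hf
    push_cast at this ⊢
    linarith
  obtain ⟨u1, u2⟩ := MRDFan.upper hm
  unfold MRD.mrdNum
  apply le_antisymm
  · refine (csInf_le ⟨_, hl⟩ ⟨_, u1, rfl⟩).trans ?_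
    push_cast at u2 ⊢
    linarith
  · exact le_csInf ⟨_, _, u1, rfl⟩ hl
end

section
/- For every n ≥ 12, the complement of the path P_n on n vertices satisfies γ_MR(P̄_n) = −1. -/
open Finset

open scoped Classical in
theorem MRD.closed_eq (n : ℕ) (f : Fin n → ℤ) (v : Fin n) :
    MRD.closedNbhdSum (SimpleGraph.pathGraph n)ᶜ f v =
      ∑ u, f u - ∑ u ∈ Finset.univ.filter
        (fun u : Fin n => v.val + 1 = u.val ∨ u.val + 1 = v.val), f u := by
  unfold MRD.closedNbhdSum
  rw [← Finset.sum_filter_add_sum_filter_not Finset.univ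
    (fun u : Fin n => v.val + 1 = u.val ∨ u.val + 1 = v.val) f, add_sub_cancel_left]
  apply Finset.sum_congr _ (fun _ _ => rfl)
  ext u
  simp only [Finset.mem_filter, Finset.mem_univ, true_and, SimpleGraph.compl_adj,
    SimpleGraph.pathGraph_adj, Fin.ext_iff, ne_eq]
  omega

/-- The extremal function, with value `e` at position 11. -/
def MRD.g (e : ℤ) (i : ℕ) : ℤ :=
  if i % 2 = 0 ∨ i = 1 ∨ i = 3 then -1
  else if i = 5 ∨ i = 7 ∨ i = 9 then 2
  else if i = 11 then e else 1

theorem MRD.sum_g (e : ℤ) (m : ℕ) :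
    ∑ i ∈ Finset.range (2 * m + 12), MRD.g e i = -2 + e := by
  induction m with
  | zero => simp [Finset.sum_range_succ, MRD.g]
  | succ k ih =>
    rw [show 2 * (k + 1) + 12 = 2 * k + 12 + 1 + 1 by ring, Finset.sum_range_succ,
      Finset.sum_range_succ, ih]
    have h1 : MRD.g e (2 * k + 12) = -1 := by unfold MRD.g; rw [if_pos (by omega)]
    have h2 : MRD.g e (2 * k + 12 + 1) = 1 := by
      unfold MRD.g; rw [if_neg (by omega), if_neg (by omega), if_neg (by omega)]
    rw [h1, h2]; ring

theorem MRD.sum_g' (n : ℕ) (hn : 12 ≤ n) :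
    ∑ i : Fin n, MRD.g (if n % 2 = 0 then 1 else 2) i.val = -1 := by
  rw [Fin.sum_univ_eq_sum_range (MRD.g (if n % 2 = 0 then 1 else 2)) n]
  rcases Nat.mod_two_eq_zero_or_one n with h | h
  · obtain ⟨m, rfl⟩ : ∃ m, n = 2 * m + 12 := ⟨(n - 12) / 2, by omega⟩
    rw [MRD.sum_g, if_pos h]; norm_num
  · obtain ⟨m, rfl⟩ : ∃ m, n = 2 * m + 12 + 1 := ⟨(n - 12) / 2, by omega⟩
    rw [Finset.sum_range_succ, MRD.sum_g, if_neg (by omega)]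
    unfold MRD.g; rw [if_pos (by omega)]; norm_num

theorem MRD.lower (n : ℕ) (hn : 12 ≤ n) (f : Fin n → ℤ)
    (hf : MRD.IsMRDF (SimpleGraph.pathGraph n)ᶜ f) : -1 ≤ ∑ v, f v := by
  classical
  obtain ⟨h1, h2, -⟩ := hf
  rw [Fintype.card_fin] at h2
  have h3 := lt_of_lt_of_le (show 0 < n by omega) h2
  obtain ⟨v, hv⟩ := Finset.card_pos.mp ((Nat.mul_pos_iff_of_pos_left Nat.two_pos).mp h3)
  have hv := (Finset.mem_filter.mp hv).2
  rw [MRD.closed_eq] at hv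
  set S := Finset.univ.filter (fun u : Fin n => v.val + 1 = u.val ∨ u.val + 1 = v.val) with hS
  have hc : S.card ≤ 2 := by
    rw [← Finset.card_map Fin.valEmbedding]
    refine le_trans (Finset.card_le_card (t := {v.val + 1, v.val - 1}) ?_) Finset.card_le_two
    intro x hx
    simp only [hS, Finset.mem_map, Finset.mem_filter, Finset.mem_univ, true_and,
      Fin.valEmbedding_apply] at hx
    obtain ⟨a, ha, rfl⟩ := hx
    simp only [Finset.mem_insert, Finset.mem_singleton]
    omega
  have hs : S.card • (-1 : ℤ) ≤ ∑ u ∈ S, f u := by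
    apply Finset.card_nsmul_le_sum
    intro x _
    rcases h1 x with h | h | h <;> omega
  simp only [nsmul_eq_mul] at hs
  omega

theorem MRD.good (n : ℕ) (e : ℤ) (v : Fin n) (hs : ∑ i : Fin n, MRD.g e i.val = -1)
    (hv : v.val % 2 = 1 ∨ v.val = 2) (h1 : v.val + 1 < n) :
    1 ≤ MRD.closedNbhdSum (SimpleGraph.pathGraph n)ᶜ (fun i => MRD.g e i.val) v := by
  classical
  rw [MRD.closed_eq, hs]
  have hS : Finset.univ.filter (fun u : Fin n => v.val + 1 = u.val ∨ u.val + 1 = v.val)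
      = {⟨v.val + 1, h1⟩, ⟨v.val - 1, by omega⟩} := by
    ext u
    simp only [Finset.mem_insert, Finset.mem_singleton, Finset.mem_filter, Finset.mem_univ,
      true_and, Fin.ext_iff]
    omega
  rw [hS, Finset.sum_pair (by simp only [ne_eq, Fin.ext_iff]; omega)]
  have a1 : MRD.g e (v.val + 1) = -1 := by unfold MRD.g; rw [if_pos (by omega)]
  have a2 : MRD.g e (v.val - 1) = -1 := by unfold MRD.g; rw [if_pos (by omega)]
  simp only [a1, a2]; norm_num

theorem MRD.upper (n : ℕ) (hn : 12 ≤ n) :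
    MRD.IsMRDF (SimpleGraph.pathGraph n)ᶜ
      (fun i => MRD.g (if n % 2 = 0 then 1 else 2) i.val) := by
  classical
  refine ⟨?_, ?_, ?_⟩
  · intro v
    simp only [MRD.g]
    split_ifs <;> simp
  · have hφ : ((n - 1) / 2 + 1) ≤ (Finset.univ.filter (fun v => 1 ≤ MRD.closedNbhdSum
        (SimpleGraph.pathGraph n)ᶜ
        (fun i => MRD.g (if n % 2 = 0 then 1 else 2) i.val) v)).card := by
      let φ : Fin ((n - 1) / 2 + 1) → Fin n := fun k =>
        ⟨if k.val = 0 then 2 else 2 * k.val - 1, by have := k.2; split_ifs <;> omega⟩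
      have hinj : Function.Injective φ := by
        intro a b h
        simp only [φ, Fin.ext_iff] at h ⊢
        split_ifs at h <;> omega
      have := Finset.card_image_of_injective Finset.univ hinj
      rw [Finset.card_univ, Fintype.card_fin] at this
      rw [← this]
      apply Finset.card_le_card
      intro x hx
      obtain ⟨k, -, rfl⟩ := Finset.mem_image.mp hx
      refine Finset.mem_filter.mpr ⟨Finset.mem_univ _, ?_⟩
      have hk := k.2
      apply MRD.good n _ _ (MRD.sum_g' n hn)
      · simp only [φ]; split_ifs <;> omega
      · simp only [φ]; split_ifs <;> omega
    rw [Fintype.card_fin]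
    have h3 : n ≤ 2 * ((n - 1) / 2 + 1) := by omega
    refine le_trans h3 (Nat.mul_le_mul_left 2 ?_)
    convert hφ
  · intro u hu
    by_cases h : u.val = 4 ∨ u.val = 6
    · refine ⟨⟨9, by omega⟩, ?_, by simp [MRD.g]⟩
      simp only [SimpleGraph.compl_adj, SimpleGraph.pathGraph_adj, Fin.ext_iff, ne_eq]
      omega
    · have h5 : u.val ≠ 5 := by
        intro h; simp [MRD.g, h] at hu
      refine ⟨⟨5, by omega⟩, ?_, by simp [MRD.g]⟩
      simp only [SimpleGraph.compl_adj, SimpleGraph.pathGraph_adj, Fin.ext_iff, ne_eq]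
      omega

/-- For `n ≥ 12`, the complement of the path on `n` vertices satisfies
`γ_MR(P̄_n) = -1`. -/
theorem mrdNum_compl_path (n : ℕ) (hn : 12 ≤ n) :
    MRD.mrdNum (SimpleGraph.pathGraph n)ᶜ = -1 := by
  apply IsLeast.csInf_eq
  constructor
  · exact ⟨_, MRD.upper n hn, (MRD.sum_g' n hn).symm⟩
  · rintro w ⟨f, hf, rfl⟩
    exact MRD.lower n hn f hf
end

section
/- Let n ≥ 3 and let G = K_{2n} − M be the graph obtained from the complete graph K_{2n} by deleting the edges of a perfect matching M (the cocktail party graph: every two distinct vertices are adjacent except matched pairs). Then γ_MR(G) = 0. -/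
open Finset

open Classical in
lemma cns_cocktail (n : ℕ) (f : Fin n × Fin 2 → ℤ) (v : Fin n × Fin 2) :
    MRD.closedNbhdSum (MRD.cocktail n) f v = (∑ u, f u) - f (v.1, v.2.rev) := by
  unfold MRD.closedNbhdSum
  rw [← Finset.sum_erase_add Finset.univ f (Finset.mem_univ (v.1, v.2.rev)), add_sub_cancel_right]
  refine Finset.sum_congr ?_ fun _ _ => rfl
  · ext ⟨j, b⟩
    refine (@Finset.mem_filter _ _ (_) _ _).trans ?_
    obtain ⟨i, a⟩ := v
    simp only [MRD.cocktail, Finset.mem_filter, Finset.mem_univ, true_and, Finset.mem_erase,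
      and_true, Prod.mk.injEq, ne_eq]
    by_cases hij : i = j
    · subst hij
      fin_cases a <;> fin_cases b <;> simp
    · simp [hij, Ne.symm hij, eq_comm]

/-- The optimal function. -/
def optF (k : ℕ) (v : Fin (k + 3) × Fin 2) : ℤ :=
  if v.1.val = 0 then 2 else if v.1.val ≤ 2 then -1 else if v.2 = 0 then 1 else -1

lemma optF_sum (k : ℕ) : ∑ v, optF k v = 0 := by
  rw [Fintype.sum_prod_type]
  simp [Fin.sum_univ_succ, optF]

lemma optF_mrdf (k : ℕ) : MRD.IsMRDF (MRD.cocktail (k + 3)) (optF k) := by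
  refine ⟨?_, ?_, ?_⟩
  · intro v
    unfold optF
    split_ifs <;> simp
  · simp only [cns_cocktail, optF_sum]
    let g : Fin (k + 3) → Fin (k + 3) × Fin 2 := fun i => if i = 0 then (1, 1) else (i, 0)
    have hg : Function.Injective g := by
      intro i j h
      simp only [g] at h
      split_ifs at h <;> simp_all
    have hle := Finset.card_le_card_of_injOn (s := Finset.univ)
      (t := Finset.univ.filter (fun v : Fin (k + 3) × Fin 2 => 1 ≤ 0 - optF k (v.1, v.2.rev))) g
      (by
        intro i _
        simp only [Finset.coe_filter, Finset.mem_univ, true_and, Set.mem_ofPred_eq, g]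
        by_cases h : i = 0
        · simp [h, optF]
        · have : i.val ≠ 0 := fun h' => h (Fin.ext h')
          simp [h, optF]) hg.injOn
    simp only [Finset.card_univ, Fintype.card_fin, Fintype.card_prod] at hle ⊢
    have e : ∀ (a b : ℕ), a = b → k + 3 ≤ a → (k + 3) * 2 ≤ 2 * b := by intros; omega
    refine e _ _ ?_ hle
    congr!
  · intro u hu
    refine ⟨(0, 0), ?_, by simp [optF]⟩
    intro h
    simp only at h
    simp [optF, h] at hu

/-- For `n ≥ 3`, the cocktail party graph `K_{2n} - M` (complete graph minus a
perfect matching) satisfies `γ_MR(K_{2n} - M) = 0`. -/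
theorem mrdNum_cocktail (n : ℕ) (hn : 3 ≤ n) :
    MRD.mrdNum (MRD.cocktail n) = 0 := by
  obtain ⟨k, rfl⟩ : ∃ k, n = k + 3 := ⟨n - 3, by omega⟩
  unfold MRD.mrdNum
  refine IsLeast.csInf_eq ⟨⟨optF k, optF_mrdf k, (optF_sum k).symm⟩, ?_⟩
  rintro w ⟨f, ⟨h1, h2, _⟩, rfl⟩
  by_contra hw
  push Not at hw
  have hc : 0 < (Finset.univ.filter
      (fun v => 1 ≤ MRD.closedNbhdSum (MRD.cocktail (k + 3)) f v)).card := by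
    simp only [Fintype.card_fin, Fintype.card_prod] at h2
    refine Nat.pos_of_ne_zero fun h => ?_
    have e : ∀ b : ℕ, b = 0 → (k + 3) * 2 ≤ 2 * b → False := by intros; omega
    refine e _ ?_ h2
    rw [← h]
  obtain ⟨v, hv⟩ := Finset.card_pos.mp hc
  have hv := (Finset.mem_filter.mp hv).2
  rw [cns_cocktail] at hv
  rcases h1 (v.1, v.2.rev) with h | h | h <;> omega
end

section
/- Let T be a tree of order n ≥ 2. Suppose there exists a dominating set S of T of minimum cardinality γ(T) such that V(T) \ S is an independent set. Then γ_MR(T) ≤ 3γ(T) − n. -/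
open Finset

/-- Let `T` be a tree of order `n ≥ 2` admitting a minimum dominating set `S` whose
complement is independent. Then `γ_MR(T) ≤ 3γ(T) - n`. -/
theorem mrdNum_tree_le_of_domSet {V : Type*} [Fintype V] (T : SimpleGraph V)
    (hT : T.IsTree) (hn : 2 ≤ Fintype.card V) (S : Finset V)
    (hdom : MRD.IsDomSet T S) (hmin : S.card = MRD.domNum T)
    (hind : ∀ a ∉ S, ∀ b ∉ S, ¬ T.Adj a b) :
    MRD.mrdNum T ≤ 3 * (MRD.domNum T : ℤ) - Fintype.card V := by
  classical
  have hle : ∀ S' : Finset V, MRD.IsDomSet T S' → S.card ≤ S'.card := by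
    intro S' h
    rw [hmin]
    exact Nat.sInf_le ⟨S', h, rfl⟩
  haveI : Nontrivial V := Fintype.one_lt_card_iff_nontrivial.mp (by omega)
  have hnb : ∀ v, ∃ u, T.Adj v u := fun v => hT.connected.preconnected.exists_adj_of_nontrivial v
  -- the complement of a minimum dominating set dominates
  have hcomp : MRD.IsDomSet T Sᶜ := by
    intro v hv
    have hvS : v ∈ S := by simpa using hv
    by_contra hcon
    push Not at hcon
    have hN : ∀ u, T.Adj v u → u ∈ S := by
      intro u hu
      by_contra hS
      exact hcon u (by simpa using hS) hu
    have hd : MRD.IsDomSet T (S.erase v) := by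
      intro u hu
      by_cases huv : u = v
      · subst huv
        obtain ⟨w, hw⟩ := hnb u
        exact ⟨w, Finset.mem_erase.mpr ⟨hw.ne', hN w hw⟩, hw⟩
      · have huS : u ∉ S := fun h => hu (Finset.mem_erase.mpr ⟨huv, h⟩)
        obtain ⟨w, hwS, hw⟩ := hdom u huS
        refine ⟨w, Finset.mem_erase.mpr ⟨?_, hwS⟩, hw⟩
        rintro rfl
        exact huS (hN u hw.symm)
    have h1 := hle _ hd
    have h2 := Finset.card_erase_lt_of_mem hvS
    omega
  have hcard : Fintype.card V ≤ 2 * Sᶜ.card := by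
    have h1 := hle _ hcomp
    have h2 := Finset.card_add_card_compl S
    omega
  have hbdd : BddBelow {w : ℤ | ∃ f : V → ℤ, MRD.IsMRDF T f ∧ w = ∑ v, f v} := by
    refine ⟨∑ _v : V, (-1 : ℤ), ?_⟩
    rintro w ⟨f, hf, rfl⟩
    refine Finset.sum_le_sum fun v _ => ?_
    rcases hf.1 v with h | h | h <;> omega
  refine csInf_le hbdd ⟨fun v => if v ∈ S then 2 else -1, ⟨?_, ?_, ?_⟩, ?_⟩
  · intro v
    by_cases h : v ∈ S <;> simp [h]
  · refine hcard.trans (Nat.mul_le_mul_left 2 (Finset.card_le_card ?_))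
    intro v hv
    have hvS : v ∉ S := by simpa using hv
    obtain ⟨u, huS, hu⟩ := hdom v hvS
    simp only [Finset.mem_filter, Finset.mem_univ, true_and, MRD.closedNbhdSum]
    have hsub : ({v, u} : Finset V) ⊆ Finset.univ.filter (fun u => T.Adj v u ∨ u = v) := by
      intro x hx
      simp only [Finset.mem_insert, Finset.mem_singleton] at hx
      rcases hx with rfl | rfl <;> simp [hu]
    have hs := Finset.sum_le_sum_of_subset_of_nonneg
      (f := fun v => if v ∈ S then (2 : ℤ) else -1) hsub (by
        intro x hx hx2
        simp only [Finset.mem_filter, Finset.mem_univ, true_and, Finset.mem_insert,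
          Finset.mem_singleton, not_or] at hx hx2
        have hxS : x ∈ S := by
          by_contra hxS
          exact hind v hvS x hxS (hx.resolve_right hx2.1)
        simp [hxS])
    rw [Finset.sum_pair hu.ne] at hs
    simp only [hvS, huS, if_true, if_false] at hs
    convert (show (1 : ℤ) ≤ -1 + 2 by norm_num).trans hs
  · intro u hu
    have huS : u ∉ S := by
      intro h
      simp [h] at hu
    obtain ⟨w, hwS, hw⟩ := hdom u huS
    exact ⟨w, hw, by simp [hwS]⟩
  · have h1 : ∀ v : V, (if v ∈ S then (2 : ℤ) else -1) = (if v ∈ S then 3 else 0) - 1 := by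
      intro v
      split_ifs <;> norm_num
    rw [← hmin]
    simp only [h1, Finset.sum_sub_distrib, Finset.sum_ite_mem]
    simp [mul_comm]
end

section
/- Let T be a tree of order n ≥ 2 with s support vertices and l pendant vertices (leaves). Then γ_MR(T) ≤ ⌈(n + 7s − 5l)/4⌉. -/
open Finset

namespace MRDAux

open scoped Classical
open SimpleGraph

theorem parent_unique {V : Type*} {T : SimpleGraph V} (hT : T.IsTree) {r v u w : V}
    (hu : T.Adj u v) (hw : T.Adj w v) (hdu : T.dist r v = T.dist r u + 1)
    (hdw : T.dist r v = T.dist r w + 1) : u = w := by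
  obtain ⟨p, hp⟩ := hT.connected.exists_walk_length_eq_dist r u
  obtain ⟨q, hq⟩ := hT.connected.exists_walk_length_eq_dist r w
  have h1 : (p.concat hu).IsPath :=
    Walk.isPath_of_length_eq_dist _ (by rw [Walk.length_concat, hp, hdu])
  have h2 : (q.concat hw).IsPath :=
    Walk.isPath_of_length_eq_dist _ (by rw [Walk.length_concat, hq, hdw])
  have h3 := (hT.existsUnique_path r v).unique h1 h2
  have h4 := congrArg Walk.penultimate h3
  simpa using h4

theorem exists_parent {V : Type*} {T : SimpleGraph V} (hT : T.IsTree) {r v : V} (h : v ≠ r) :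
    ∃ u, T.Adj v u ∧ T.dist r v = T.dist r u + 1 := by
  obtain ⟨p, hp⟩ := hT.connected.exists_walk_length_eq_dist v r
  cases p with
  | nil => exact absurd rfl h
  | @cons _ u _ ha q =>
    refine ⟨u, ha, ?_⟩
    have h1 : T.dist u r ≤ q.length := dist_le q
    rw [Walk.length_cons] at hp
    have h2 := hT.dist_eq_dist_add_one_of_adj r ha
    rw [dist_comm (u := r) (v := v), dist_comm (u := r) (v := u)] at *
    omega

theorem exists_child {V : Type*} [Fintype V] {T : SimpleGraph V} [DecidableRel T.Adj]
    (hT : T.IsTree) {r v : V} (h : v ≠ r) (hd : T.degree v ≠ 1) :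
    ∃ u, T.Adj v u ∧ T.dist r u = T.dist r v + 1 := by
  obtain ⟨u, hu, hdu⟩ := exists_parent hT h
  by_contra! hcon
  apply hd
  rw [degree_eq_one_iff_existsUnique_adj]
  refine ⟨u, hu, fun w hw => ?_⟩
  have h2 := hT.dist_eq_dist_add_one_of_adj r hw
  have h3 := hcon w hw
  exact parent_unique hT hw.symm hu.symm (by omega) hdu

theorem mrdNum_le {V : Type*} [Fintype V] {G : SimpleGraph V} {f : V → ℤ}
    (hf : MRD.IsMRDF G f) : MRD.mrdNum G ≤ ∑ v, f v := by
  refine csInf_le ⟨-(Fintype.card V : ℤ), ?_⟩ ⟨f, hf, rfl⟩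
  rintro w ⟨g, hg, rfl⟩
  have : ∑ v : V, (-1 : ℤ) ≤ ∑ v, g v :=
    Finset.sum_le_sum fun v _ => by rcases hg.1 v with h | h | h <;> omega
  simpa using this

theorem key {V : Type*} [Fintype V] {T : SimpleGraph V} (L S : Finset V)
    (hdisj : Disjoint L S) (hcard : S.card ≤ L.card)
    (hLS : ∀ v ∈ L, ∃ u ∈ S, ∀ w, T.Adj v w ↔ w = u)
    (hM : ∀ v, v ∉ L → v ∉ S → ∀ w, T.Adj v w → w ∉ L)
    (g : V → ℕ) (hg : ∀ v w, T.Adj v w → g v % 2 ≠ g w % 2)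
    (hg1 : ∀ v, v ∉ L → v ∉ S → ∃ w, T.Adj v w ∧ g w % 4 = (g v + 1) % 4)
    (hg3 : ∀ v, v ∉ L → v ∉ S → ∃ w, T.Adj v w ∧ g w % 4 = (g v + 3) % 4)
    (m : ℕ → ℕ) (hm : ∀ j, m j = (univ.filter fun v => v ∉ L ∧ v ∉ S ∧ g v % 4 = j).card)
    (h02 : m 0 + m 2 ≤ m 1 + m 3) (h0 : m 0 ≤ m 2) :
    4 * MRD.mrdNum T ≤ Fintype.card V + 7 * S.card - 5 * L.card := by
  have hd : ∀ v, v ∈ L → v ∉ S := fun v h => Finset.disjoint_left.mp hdisj h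
  set f : V → ℤ := fun v => if v ∈ L then -1 else if v ∈ S then 2 else
    if g v % 4 = 0 then 2 else if g v % 4 = 2 then 1 else -1 with hf
  have hfL : ∀ v ∈ L, f v = -1 := fun v h => by simp [hf, h]
  have hfS : ∀ v ∈ S, f v = 2 := fun v h => by
    have : v ∉ L := fun h' => hd v h' h
    simp [hf, h, this]
  have hf0 : ∀ v, v ∉ L → g v % 4 = 0 → f v = 2 := fun v h h' => by simp [hf, h, h']
  have hfe : ∀ v, v ∉ L → g v % 2 = 0 → 1 ≤ f v := fun v h h' => by
    have : g v % 4 = 0 ∨ g v % 4 = 2 := by omega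
    by_cases hS : v ∈ S
    · rw [hfS v hS]; norm_num
    · rcases this with h1 | h1 <;> simp [hf, h, hS, h1]
  have hfo : ∀ v, v ∉ L → v ∉ S → g v % 2 = 1 → f v = -1 := fun v h hS h' => by
    have h1 : g v % 4 ≠ 0 := by omega
    have h2 : g v % 4 ≠ 2 := by omega
    simp [hf, h, hS, h1, h2]
  have hone : ∀ v, f v = -1 → v ∈ L ∨ (v ∉ L ∧ v ∉ S ∧ g v % 2 = 1) := by
    intro v hv
    by_cases hL : v ∈ L
    · exact Or.inl hL
    right
    refine ⟨hL, fun hS => ?_, ?_⟩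
    · rw [hfS v hS] at hv; norm_num at hv
    · by_contra h
      have := hfe v hL (by omega)
      omega
  -- every odd middle vertex has two positive neighbours, one of them with value 2
  have hodd : ∀ v, v ∉ L → v ∉ S → g v % 2 = 1 → ∃ w, T.Adj v w ∧ f w = 2 := by
    intro v hL hS ho
    obtain ⟨a, ha, hga⟩ := hg1 v hL hS
    obtain ⟨b, hb, hgb⟩ := hg3 v hL hS
    have : g a % 4 = 0 ∨ g b % 4 = 0 := by omega
    rcases this with h | h
    · exact ⟨a, ha, hf0 a (hM v hL hS a ha) h⟩
    · exact ⟨b, hb, hf0 b (hM v hL hS b hb) h⟩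
  have hnb : ∀ v, MRD.closedNbhdSum T f v = f v + ∑ u ∈ univ.filter (fun u => T.Adj v u), f u := by
    intro v
    unfold MRD.closedNbhdSum
    have : univ.filter (fun u => T.Adj v u ∨ u = v) = insert v (univ.filter fun u => T.Adj v u) := by
      ext u; simp [or_comm]
    rw [this, Finset.sum_insert (by simp)]
  have hsatL : ∀ v ∈ L, 1 ≤ MRD.closedNbhdSum T f v := by
    intro v hv
    obtain ⟨u, hu, hw⟩ := hLS v hv
    have : univ.filter (fun w => T.Adj v w) = {u} := by ext w; simp [hw]
    rw [hnb, this, hfL v hv, Finset.sum_singleton, hfS u hu]; norm_num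
  have hsatM : ∀ v, v ∉ L → v ∉ S → g v % 2 = 1 → 1 ≤ MRD.closedNbhdSum T f v := by
    intro v hL hS ho
    obtain ⟨w, hw, hfw⟩ := hodd v hL hS ho
    rw [hnb, hfo v hL hS ho]
    have : f w ≤ ∑ u ∈ univ.filter (fun u => T.Adj v u), f u := by
      refine Finset.single_le_sum (f := f) (fun u hu => ?_) (by simpa using hw)
      have hu' : T.Adj v u := by simpa using hu
      have := hg v u hu'
      have := hfe u (hM v hL hS u hu') (by omega)
      omega
    omega
  have hn : (Fintype.card V : ℤ) = L.card + S.card + m 0 + m 1 + m 2 + m 3 := by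
    have : ∀ v : V, (1 : ℤ) = (if v ∈ L then 1 else 0) + (if v ∈ S then 1 else 0)
        + (if v ∉ L ∧ v ∉ S ∧ g v % 4 = 0 then 1 else 0)
        + (if v ∉ L ∧ v ∉ S ∧ g v % 4 = 1 then 1 else 0)
        + (if v ∉ L ∧ v ∉ S ∧ g v % 4 = 2 then 1 else 0)
        + (if v ∉ L ∧ v ∉ S ∧ g v % 4 = 3 then 1 else 0) := by
      intro v
      have h1 := hd v
      have : g v % 4 = 0 ∨ g v % 4 = 1 ∨ g v % 4 = 2 ∨ g v % 4 = 3 := by omega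
      by_cases hL : v ∈ L <;> by_cases hS : v ∈ S <;>
        rcases this with h | h | h | h <;> first | exact absurd hS (h1 hL) | simp [hL, hS, h]
    have h2 : (Fintype.card V : ℤ) = ∑ v : V, (1 : ℤ) := by simp
    rw [h2, Finset.sum_congr rfl (fun v _ => this v)]
    simp only [Finset.sum_add_distrib, Finset.sum_boole, ← hm]
    simp
  have hw : ∑ v, f v = - L.card + 2 * S.card + 2 * m 0 - m 1 + m 2 - m 3 := by
    have : ∀ v : V, f v = -(if v ∈ L then 1 else 0) + 2 * (if v ∈ S then 1 else 0)
        + 2 * (if v ∉ L ∧ v ∉ S ∧ g v % 4 = 0 then 1 else 0)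
        - (if v ∉ L ∧ v ∉ S ∧ g v % 4 = 1 then 1 else 0)
        + (if v ∉ L ∧ v ∉ S ∧ g v % 4 = 2 then 1 else 0)
        - (if v ∉ L ∧ v ∉ S ∧ g v % 4 = 3 then 1 else 0) := by
      intro v
      have h1 := hd v
      have : g v % 4 = 0 ∨ g v % 4 = 1 ∨ g v % 4 = 2 ∨ g v % 4 = 3 := by omega
      simp only [hf]
      by_cases hL : v ∈ L <;> by_cases hS : v ∈ S <;>
        rcases this with h | h | h | h <;> first | exact absurd hS (h1 hL) | simp [hL, hS, h]
    rw [Finset.sum_congr rfl (fun v _ => this v)]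
    simp only [Finset.sum_add_distrib, Finset.sum_sub_distrib, Finset.sum_neg_distrib,
      ← Finset.mul_sum, Finset.sum_boole, ← hm]
    simp
  have hsat : L.card + m 1 + m 3 ≤ (univ.filter fun v => 1 ≤ MRD.closedNbhdSum T f v).card := by
    rw [hm 1, hm 3, ← Finset.card_union_of_disjoint, ← Finset.card_union_of_disjoint]
    · apply Finset.card_le_card
      intro v hv
      simp only [Finset.mem_union, Finset.mem_filter, Finset.mem_univ, true_and] at hv ⊢
      rcases hv with (h | ⟨h1, h2, h3⟩) | ⟨h1, h2, h3⟩
      · exact hsatL v h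
      · exact hsatM v h1 h2 (by omega)
      · exact hsatM v h1 h2 (by omega)
    · rw [Finset.disjoint_left]
      intro v hv hv'
      simp only [Finset.mem_union, Finset.mem_filter, Finset.mem_univ, true_and] at hv hv'
      rcases hv with h | ⟨h1, h2, h3⟩
      · exact hv'.1 h
      · omega
    · rw [Finset.disjoint_left]
      intro v hv hv'
      simp only [Finset.mem_filter, Finset.mem_univ, true_and] at hv'
      exact hv'.1 hv
  have hmr : MRD.IsMRDF T f := by
    refine ⟨?_, ?_, ?_⟩
    · intro v
      simp only [hf]
      split_ifs <;> simp
    · omega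
    · intro u hu
      rcases hone u hu with h | ⟨h1, h2, h3⟩
      · obtain ⟨w, hw, hw'⟩ := hLS u h
        exact ⟨w, (hw' w).mpr rfl, hfS w hw⟩
      · exact hodd u h1 h2 h3
  have := mrdNum_le hmr
  omega

theorem two_leaves {V : Type*} {T : SimpleGraph V} (hT : T.Connected) {u v : V}
    (hu : ∀ w, T.Adj u w ↔ w = v) (hv : ∀ w, T.Adj v w ↔ w = u) (x : V) : x = u ∨ x = v := by
  obtain ⟨p⟩ := hT.preconnected x u
  have : ∀ (a b : V) (p : T.Walk a b), (b = u ∨ b = v) → (a = u ∨ a = v) := by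
    intro a b p
    induction p with
    | nil => exact id
    | cons h q ih =>
      intro hb
      rcases ih hb with h1 | h1
      · subst h1; exact Or.inr ((hu _).mp h.symm)
      · subst h1; exact Or.inl ((hv _).mp h.symm)
  exact this x u p (Or.inl rfl)

theorem main {V : Type*} [Fintype V] (T : SimpleGraph V)
    [DecidableRel T.Adj] (hT : T.IsTree) (hn : 2 ≤ Fintype.card V) (L S : Finset V)
    (hl : ∀ v, v ∈ L ↔ T.degree v = 1)
    (hs : ∀ v, v ∈ S ↔ ∃ u, T.Adj v u ∧ T.degree u = 1) :
    4 * MRD.mrdNum T ≤ Fintype.card V + 7 * S.card - 5 * L.card + 2 ∧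
    (4 * MRD.mrdNum T ≤ Fintype.card V + 7 * S.card - 5 * L.card ∨
      (MRD.mrdNum T ≤ 2 ∧ Fintype.card V = 2 ∧ S.card = 2 ∧ L.card = 2)) := by
  have hleaf : ∀ v ∈ L, ∃ u, ∀ w, T.Adj v w ↔ w = u := by
    intro v hv
    obtain ⟨u, hu, hw⟩ := degree_eq_one_iff_existsUnique_adj.mp ((hl v).mp hv)
    exact ⟨u, fun w => ⟨hw w, fun h => h ▸ hu⟩⟩
  by_cases hdisj : Disjoint L S
  swap
  · obtain ⟨u, huL, huS⟩ := Finset.not_disjoint_iff.mp hdisj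
    obtain ⟨v, huv, hv⟩ := (hs u).mp huS
    have hvL := (hl v).mpr hv
    obtain ⟨a, ha⟩ := hleaf u huL
    obtain ⟨b, hb⟩ := hleaf v hvL
    obtain rfl := (ha v).mp huv
    obtain rfl := (hb u).mp huv.symm
    have hall := two_leaves hT.connected ha hb
    have huniv : (univ : Finset V) = {u, v} := by ext x; simpa using hall x
    have hc : Fintype.card V = 2 := by
      rw [← Finset.card_univ, huniv, Finset.card_pair huv.ne]
    have hL : L = univ := by
      ext x; rcases hall x with rfl | rfl <;> simp only [Finset.mem_univ, iff_true] <;> assumption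
    have hS : S = univ := by
      ext x; rcases hall x with rfl | rfl
      · simpa using huS
      · simp only [Finset.mem_univ, iff_true]
        exact (hs x).mpr ⟨u, huv.symm, (hl u).mp huL⟩
    have hf : MRD.IsMRDF T (fun _ => 1) := by
      refine ⟨by simp, ?_, by simp⟩
      have : (univ.filter fun v => 1 ≤ MRD.closedNbhdSum T (fun _ => 1) v) = univ := by
        ext x
        simp only [Finset.mem_filter, Finset.mem_univ, true_and, iff_true, MRD.closedNbhdSum,
          Finset.sum_const, nsmul_eq_mul, mul_one]
        norm_cast
        exact Finset.card_pos.mpr ⟨x, by simp⟩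
      rw [this, Finset.card_univ]; omega
    have h1 := mrdNum_le hf
    have h2 : L.card = 2 := by rw [hL, Finset.card_univ, hc]
    have h3 : S.card = 2 := by rw [hS, Finset.card_univ, hc]
    simp only [Finset.sum_const, Finset.card_univ, hc] at h1
    norm_num at h1
    refine ⟨by omega, Or.inr ⟨h1, hc, h3, h2⟩⟩
  · have hcard : S.card ≤ L.card := by
      have h : ∀ v : V, ∃ u, v ∈ S → T.Adj v u ∧ T.degree u = 1 := by
        intro v
        by_cases hv : v ∈ S
        · obtain ⟨u, hu⟩ := (hs v).mp hv
          exact ⟨u, fun _ => hu⟩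
        · exact ⟨v, fun h => absurd h hv⟩
      choose c hc using h
      refine Finset.card_le_card_of_injOn c (fun v hv => (hl _).mpr (hc v hv).2) ?_
      intro v hv w hw hvw
      obtain ⟨u, hu⟩ := hleaf (c v) ((hl _).mpr (hc v hv).2)
      rw [(hu v).mp (hc v hv).1.symm]
      have hw' := (hc w hw).1.symm
      rw [← hvw] at hw'
      exact ((hu w).mp hw').symm
    have : Nontrivial V := Fintype.one_lt_card_iff_nontrivial.mp (by omega)
    obtain ⟨r, hr⟩ := hT.exists_vert_degree_one_of_nontrivial
    have hne : ∀ v, v ∉ L → v ≠ r := fun v hv h => hv ((hl v).mpr (h ▸ hr))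
    set m : ℕ → ℕ := fun j =>
      (univ.filter fun v => v ∉ L ∧ v ∉ S ∧ T.dist r v % 4 = j).card with hm
    have K : ∀ t : ℕ, t < 4 →
        m ((4 - t) % 4) + m ((6 - t) % 4) ≤ m ((5 - t) % 4) + m ((7 - t) % 4) →
        m ((4 - t) % 4) ≤ m ((6 - t) % 4) →
        4 * MRD.mrdNum T ≤ Fintype.card V + 7 * S.card - 5 * L.card := by
      intro t ht h1 h2
      have hmm : ∀ j < 4, (univ.filter fun v => v ∉ L ∧ v ∉ S ∧ (T.dist r v + t) % 4 = j).card
          = m ((4 + j - t) % 4) := by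
        intro j hj
        simp only [hm]
        congr 1
        ext v
        simp only [Finset.mem_filter, Finset.mem_univ, true_and]
        refine and_congr_right fun _ => and_congr_right fun _ => ?_
        omega
      refine key (T := T) L S hdisj hcard ?_ ?_ (fun v => T.dist r v + t) ?_ ?_ ?_
        (fun j => (univ.filter fun v => v ∉ L ∧ v ∉ S ∧ (T.dist r v + t) % 4 = j).card)
        (fun _ => rfl) ?_ ?_
      · intro v hv
        obtain ⟨u, hu⟩ := hleaf v hv
        exact ⟨u, (hs u).mpr ⟨v, ((hu u).mpr rfl).symm, (hl v).mp hv⟩, hu⟩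
      · intro v _ hS w hw hwL
        exact hS ((hs v).mpr ⟨w, hw, (hl w).mp hwL⟩)
      · intro v w hvw
        have := hT.dist_eq_dist_add_one_of_adj r hvw
        omega
      · intro v hL _
        obtain ⟨w, hw, h⟩ := exists_child hT (hne v hL) (fun h => hL ((hl v).mpr h))
        exact ⟨w, hw, by omega⟩
      · intro v hL _
        obtain ⟨w, hw, h⟩ := exists_parent hT (hne v hL)
        exact ⟨w, hw, by omega⟩
      · rw [hmm 0 (by omega), hmm 1 (by omega), hmm 2 (by omega), hmm 3 (by omega)]
        exact h1
      · rw [hmm 0 (by omega), hmm 2 (by omega)]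
        exact h2
    have k0 := K 0 (by omega)
    have k1 := K 1 (by omega)
    have k2 := K 2 (by omega)
    have k3 := K 3 (by omega)
    norm_num at k0 k1 k2 k3
    have : 4 * MRD.mrdNum T ≤ Fintype.card V + 7 * S.card - 5 * L.card := by
      clear_value m
      clear K
      rcases le_total (m 0 + m 2) (m 1 + m 3) with h | h
      · rcases le_total (m 0) (m 2) with h' | h'
        · exact k0 h h'
        · exact k2 (by omega) h'
      · rcases le_total (m 1) (m 3) with h' | h'
        · exact k3 (by omega) h'
        · exact k1 (by omega) h'
    exact ⟨by omega, Or.inl this⟩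

end MRDAux

/-- Let `T` be a tree of order `n ≥ 2` with `s` support vertices and `l` leaves.
Then `γ_MR(T) ≤ ⌈(n + 7s - 5l)/4⌉`. -/
theorem mrdNum_tree_le_supports_leaves {V : Type*} [Fintype V] (T : SimpleGraph V)
    [DecidableRel T.Adj] (hT : T.IsTree) (hn : 2 ≤ Fintype.card V) (s l : ℕ)
    (hl : l = (Finset.univ.filter (fun v : V => T.degree v = 1)).card)
    (hs : s = (Finset.univ.filter (fun v : V => ∃ u, T.Adj v u ∧ T.degree u = 1)).card) :
    MRD.mrdNum T ≤ ⌈((Fintype.card V : ℚ) + 7 * s - 5 * l) / 4⌉ := by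
  have h := (MRDAux.main T hT hn (Finset.univ.filter (fun v : V => T.degree v = 1))
    (Finset.univ.filter (fun v : V => ∃ u, T.Adj v u ∧ T.degree u = 1))
    (by simp) (by simp)).2
  rw [← hl, ← hs] at h
  rcases h with h | ⟨h1, h2, h3, h4⟩
  · have hq : (4 : ℚ) * (MRD.mrdNum T : ℚ) ≤ (Fintype.card V : ℚ) + 7 * s - 5 * l := by
      exact_mod_cast h
    have : (MRD.mrdNum T : ℚ) ≤ ⌈((Fintype.card V : ℚ) + 7 * s - 5 * l) / 4⌉ :=
      le_trans (by linarith) (Int.le_ceil _)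
    exact_mod_cast this
  · refine h1.trans ?_
    rw [h2, h3, h4]
    have : (1 : ℤ) < ⌈(((2 : ℕ) : ℚ) + 7 * (2 : ℕ) - 5 * (2 : ℕ)) / 4⌉ := by
      rw [Int.lt_ceil]; norm_num
    exact this
end

section
/- Let G be a finite simple graph of order n ≥ 2 with maximum degree Δ ≥ 1. Then γ_MR(G) ≥ n(2 − Δ)/(Δ + 1); equivalently, every MRDF f on G satisfies (Δ + 1)·w(f) ≥ n(2 − Δ). -/
open Finset

open scoped Classical in
theorem mrd_aux {V : Type*} [Fintype V] (G : SimpleGraph V)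
    [DecidableRel G.Adj] (hΔ : 1 ≤ G.maxDegree) (f : V → ℤ) (hf : MRD.IsMRDF G f) :
      (Fintype.card V : ℤ) * (2 - G.maxDegree) ≤ ((G.maxDegree : ℤ) + 1) * ∑ v, f v := by
  obtain ⟨hv, -, h2⟩ := hf
  choose! g hg using h2
  have hcard : (univ.filter (fun v => f v = -1)).card
      ≤ G.maxDegree * (univ.filter (fun v => f v = 2)).card := by
    apply Finset.card_le_mul_card_image_of_maps_to (f := g)
    · intro u hu
      simp only [mem_filter, mem_univ, true_and] at hu ⊢
      exact (hg u hu).2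
    · intro b _
      refine le_trans (Finset.card_le_card ?_) (G.degree_le_maxDegree b)
      intro u hu
      simp only [mem_filter, mem_univ, true_and] at hu
      rw [SimpleGraph.mem_neighborFinset, ← hu.2]
      exact (hg u hu.1).1.symm
  have hsum : ∑ v, (3 * (G.maxDegree : ℤ) * (if f v = 2 then 1 else 0)
        - 3 * (if f v = -1 then 1 else 0))
      ≤ ∑ v, (((G.maxDegree : ℤ) + 1) * f v - (2 - G.maxDegree)) := by
    apply Finset.sum_le_sum
    intro v _
    have : (1 : ℤ) ≤ G.maxDegree := by exact_mod_cast hΔ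
    rcases hv v with h | h | h <;> simp [h] <;> linarith
  rw [Finset.sum_sub_distrib, Finset.sum_sub_distrib, ← Finset.mul_sum, ← Finset.mul_sum,
    ← Finset.mul_sum, Finset.sum_boole, Finset.sum_boole, Finset.sum_const, Finset.card_univ,
    nsmul_eq_mul] at hsum
  have hc : ((univ.filter (fun v => f v = -1)).card : ℤ)
      ≤ G.maxDegree * (univ.filter (fun v => f v = 2)).card := by exact_mod_cast hcard
  linarith

theorem mrd_one {V : Type*} [Fintype V] (G : SimpleGraph V) :
    MRD.IsMRDF G (fun _ => 1) := by
  classical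
  refine ⟨fun v => by simp, ?_, fun u hu => by norm_num at hu⟩
  have : ∀ v, 1 ≤ MRD.closedNbhdSum G (fun _ => 1) v := by
    intro v
    unfold MRD.closedNbhdSum
    rw [Finset.sum_const, nsmul_eq_mul, mul_one]
    exact_mod_cast Finset.card_pos.mpr ⟨v, by simp⟩
  rw [Finset.filter_true_of_mem (fun v _ => this v), Finset.card_univ]
  omega

/-- Let `G` be a graph of order `n ≥ 2` with maximum degree `Δ ≥ 1`. Then
`γ_MR(G) ≥ n(2 - Δ)/(Δ + 1)`; equivalently, every MRDF `f` on `G` satisfies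
`(Δ + 1) · w(f) ≥ n(2 - Δ)`. -/
theorem mrdNum_lower_bound {V : Type*} [Fintype V] (G : SimpleGraph V)
    [DecidableRel G.Adj] (hn : 2 ≤ Fintype.card V) (hΔ : 1 ≤ G.maxDegree) :
    ((Fintype.card V : ℚ) * (2 - G.maxDegree)) / (G.maxDegree + 1) ≤ (MRD.mrdNum G : ℚ) ∧
    ∀ f : V → ℤ, MRD.IsMRDF G f →
      (Fintype.card V : ℤ) * (2 - G.maxDegree) ≤ ((G.maxDegree : ℤ) + 1) * ∑ v, f v := by
  refine ⟨?_, fun f hf => mrd_aux G hΔ f hf⟩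
  have hmem : MRD.mrdNum G ∈ {w : ℤ | ∃ f : V → ℤ, MRD.IsMRDF G f ∧ w = ∑ v, f v} := by
    apply Int.csInf_mem
    · exact ⟨_, _, mrd_one G, rfl⟩
    · refine ⟨∑ _v : V, (-1), ?_⟩
      rintro w ⟨f, hf, rfl⟩
      apply Finset.sum_le_sum
      intro v _
      rcases hf.1 v with h | h | h <;> rw [h] <;> norm_num
  obtain ⟨f, hf, hw⟩ := hmem
  have := mrd_aux G hΔ f hf
  rw [← hw] at this
  rw [div_le_iff₀ (by positivity), mul_comm (MRD.mrdNum G : ℚ)]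
  exact_mod_cast this
end

section
/- The corona K_3 ∘ K_3 of the triangle with the triangle satisfies γ_MR(K_3 ∘ K_3) = −1. -/
open Finset

open MRD in
theorem cns_inr (f : Fin 3 ⊕ Fin 3 × Fin 3 → ℤ) (i j : Fin 3) :
    closedNbhdSum (corona (⊤ : SimpleGraph (Fin 3)) (⊤ : SimpleGraph (Fin 3))) f (.inr (i, j)) =
      f (.inl i) + f (.inr (i, 0)) + f (.inr (i, 1)) + f (.inr (i, 2)) := by
  unfold closedNbhdSum
  rw [Finset.sum_filter, Fintype.sum_sum_type, Fintype.sum_prod_type]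
  fin_cases i <;> fin_cases j <;> simp [Fin.sum_univ_three, corona] <;> ring

open MRD in
theorem cns_inl (f : Fin 3 ⊕ Fin 3 × Fin 3 → ℤ) (i : Fin 3) :
    closedNbhdSum (corona (⊤ : SimpleGraph (Fin 3)) (⊤ : SimpleGraph (Fin 3))) f (.inl i) =
      f (.inl 0) + f (.inl 1) + f (.inl 2)
        + f (.inr (i, 0)) + f (.inr (i, 1)) + f (.inr (i, 2)) := by
  unfold closedNbhdSum
  rw [Finset.sum_filter, Fintype.sum_sum_type, Fintype.sum_prod_type]
  fin_cases i <;> simp [Fin.sum_univ_three, corona] <;> ring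

open MRD in
/-- Every block (a centre with its three leaves) has weight at least `-1`. -/
theorem block_ge (f : Fin 3 ⊕ Fin 3 × Fin 3 → ℤ)
    (hf : IsMRDF (corona (⊤ : SimpleGraph (Fin 3)) (⊤ : SimpleGraph (Fin 3))) f) (i : Fin 3) :
    -1 ≤ f (.inl i) + f (.inr (i, 0)) + f (.inr (i, 1)) + f (.inr (i, 2)) := by
  obtain ⟨h1, -, h3⟩ := hf
  have hc := h1 (.inl i)
  have h0 := h1 (.inr (i, 0))
  have h01 := h1 (.inr (i, 1))
  have h02 := h1 (.inr (i, 2))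
  have key : ∀ j, f (.inr (i, j)) = -1 → f (.inl i) = 2 ∨ ∃ k, f (.inr (i, k)) = 2 := by
    intro j hj
    obtain ⟨w, hw, hw2⟩ := h3 _ hj
    rcases w with u | ⟨u, k⟩
    · have : u = i := hw
      subst this
      exact Or.inl hw2
    · have : i = u := hw.1
      subst this
      exact Or.inr ⟨k, hw2⟩
  simp only [Fin.exists_fin_succ, Fin.forall_fin_succ] at key
  simp at key
  omega

open MRD in
/-- A function of weight `-1`. -/
def wit : Fin 3 ⊕ Fin 3 × Fin 3 → ℤ
  | .inl _ => 2
  | .inr p => if p = (0, 0) then 1 else -1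

/-- The corona `K_3 ∘ K_3` satisfies `γ_MR(K_3 ∘ K_3) = -1`. -/
theorem mrdNum_corona_K3_K3 :
    MRD.mrdNum (MRD.corona (⊤ : SimpleGraph (Fin 3)) (⊤ : SimpleGraph (Fin 3))) = -1 := by
  unfold MRD.mrdNum
  refine IsLeast.csInf_eq ⟨⟨wit, ⟨?_, ?_, ?_⟩, ?_⟩, ?_⟩
  · decide
  · have hsub : ({.inl 0, .inl 1, .inl 2, .inr (0, 0), .inr (0, 1), .inr (0, 2)} :
        Finset (Fin 3 ⊕ Fin 3 × Fin 3)) ⊆ Finset.univ.filter (fun v => 1 ≤ MRD.closedNbhdSum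
          (MRD.corona (⊤ : SimpleGraph (Fin 3)) (⊤ : SimpleGraph (Fin 3))) wit v) := by
      intro v hv
      simp only [Finset.mem_insert, Finset.mem_singleton] at hv
      rw [Finset.mem_filter]
      refine ⟨Finset.mem_univ _, ?_⟩
      rcases hv with rfl | rfl | rfl | rfl | rfl | rfl <;>
        simp only [cns_inl, cns_inr] <;> decide
    have hc := Finset.card_le_card hsub
    have h6 : ({.inl 0, .inl 1, .inl 2, .inr (0, 0), .inr (0, 1), .inr (0, 2)} :
        Finset (Fin 3 ⊕ Fin 3 × Fin 3)).card = 6 := by decide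
    have h12 : Fintype.card (Fin 3 ⊕ Fin 3 × Fin 3) = 12 := by simp
    rw [h12]
    omega
  · rintro (u | ⟨u, k⟩) h
    · simp [wit] at h
    · exact ⟨.inl u, rfl, rfl⟩
  · decide
  · rintro w ⟨f, hf, rfl⟩
    have b0 := block_ge f hf 0
    have b1 := block_ge f hf 1
    have b2 := block_ge f hf 2
    have hsum : ∑ v, f v = (f (.inl 0) + f (.inl 1) + f (.inl 2))
        + ((f (.inr (0, 0)) + f (.inr (0, 1)) + f (.inr (0, 2)))
        + (f (.inr (1, 0)) + f (.inr (1, 1)) + f (.inr (1, 2)))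
        + (f (.inr (2, 0)) + f (.inr (2, 1)) + f (.inr (2, 2)))) := by
      rw [Fintype.sum_sum_type, Fintype.sum_prod_type]
      simp [Fin.sum_univ_three]
    rw [hsum]
    have hex : ∃ i : Fin 3,
        1 ≤ f (.inl i) + f (.inr (i, 0)) + f (.inr (i, 1)) + f (.inr (i, 2)) := by
      by_contra hno
      have hsub : Finset.univ.filter (fun v => 1 ≤ MRD.closedNbhdSum
          (MRD.corona (⊤ : SimpleGraph (Fin 3)) (⊤ : SimpleGraph (Fin 3))) f v) ⊆
          ({.inl 0, .inl 1, .inl 2} : Finset (Fin 3 ⊕ Fin 3 × Fin 3)) := by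
        rintro (u | ⟨u, k⟩) hv
        · fin_cases u <;> simp
        · rw [Finset.mem_filter, cns_inr] at hv
          exact absurd ⟨u, hv.2⟩ hno
      have hc := Finset.card_le_card hsub
      have h3 : ({.inl 0, .inl 1, .inl 2} : Finset (Fin 3 ⊕ Fin 3 × Fin 3)).card = 3 := by decide
      have h12 : Fintype.card (Fin 3 ⊕ Fin 3 × Fin 3) = 12 := by simp
      have hm := hf.2.1
      rw [h12] at hm
      omega
    simp only [Fin.exists_fin_succ] at hex
    simp at hex
    omega
end

section
/- For every integer n ≥ 1, the corona of the complete graph K_{3n} with the triangle K_3 satisfies γ_MR(K_{3n} ∘ K_3) = −n. -/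
open Finset

namespace MRD

open scoped Classical

theorem cns_leaf {m : ℕ} (f : Fin m ⊕ Fin m × Fin 3 → ℤ) (v : Fin m) (x : Fin 3) :
    closedNbhdSum (corona (⊤ : SimpleGraph (Fin m)) (⊤ : SimpleGraph (Fin 3))) f (.inr (v, x))
      = f (.inl v) + ∑ y, f (.inr (v, y)) := by
  unfold closedNbhdSum
  rw [Finset.sum_filter, Fintype.sum_sum_type, Fintype.sum_prod_type]
  congr 1
  · rw [Finset.sum_eq_single v]
    · simp [corona]
    · intro b _ hb
      simp [corona, hb]
    · simp
  · rw [Finset.sum_eq_single v]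
    · refine Finset.sum_congr rfl fun y _ => ?_
      rw [if_pos]
      by_cases h : y = x
      · simp [h]
      · left; exact ⟨rfl, fun h' => h h'.symm⟩
    · intro b _ hb
      refine Finset.sum_eq_zero fun y _ => ?_
      rw [if_neg]
      rintro (h | h)
      · exact hb h.1.symm
      · simp at h; exact hb h.1
    · simp

theorem cns_hub {m : ℕ} (f : Fin m ⊕ Fin m × Fin 3 → ℤ) (v : Fin m) :
    closedNbhdSum (corona (⊤ : SimpleGraph (Fin m)) (⊤ : SimpleGraph (Fin 3))) f (.inl v)
      = ∑ u, f (.inl u) + ∑ y, f (.inr (v, y)) := by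
  unfold closedNbhdSum
  rw [Finset.sum_filter, Fintype.sum_sum_type, Fintype.sum_prod_type]
  congr 1
  · refine Finset.sum_congr rfl fun y _ => ?_
    rw [if_pos]
    by_cases h : y = v
    · simp [h]
    · left; exact fun h' => h h'.symm
  · rw [Finset.sum_eq_single v]
    · simp [corona]
    · intro b _ hb
      simp [corona, hb.symm]
    · simp

theorem weight_eq {m : ℕ} (f : Fin m ⊕ Fin m × Fin 3 → ℤ) :
    ∑ v, f v = ∑ v, (f (.inl v) + ∑ y, f (.inr (v, y))) := by
  rw [Fintype.sum_sum_type, Fintype.sum_prod_type, Finset.sum_add_distrib]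

theorem good_card {m : ℕ} (f : Fin m ⊕ Fin m × Fin 3 → ℤ) :
    (Finset.univ.filter (fun v => 1 ≤ closedNbhdSum
      (corona (⊤ : SimpleGraph (Fin m)) (⊤ : SimpleGraph (Fin 3))) f v)).card
    = ∑ v : Fin m, (if 1 ≤ ∑ u, f (.inl u) + ∑ y, f (.inr (v, y)) then 1 else 0)
      + ∑ v : Fin m, (if 1 ≤ f (.inl v) + ∑ y, f (.inr (v, y)) then 3 else 0) := by
  rw [Finset.card_filter, Fintype.sum_sum_type, Fintype.sum_prod_type]
  simp only [cns_hub, cns_leaf]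
  simp

theorem cluster_ge {m : ℕ} (f : Fin m ⊕ Fin m × Fin 3 → ℤ)
    (hf : IsMRDF (corona (⊤ : SimpleGraph (Fin m)) (⊤ : SimpleGraph (Fin 3))) f) (v : Fin m) :
    -1 ≤ f (.inl v) + ∑ y, f (.inr (v, y)) := by
  obtain ⟨h1, -, h3⟩ := hf
  have key : ∀ x, f (.inr (v, x)) = -1 → f (.inl v) = 2 ∨ ∃ y, f (.inr (v, y)) = 2 := by
    intro x hx
    obtain ⟨w, hw, hw2⟩ := h3 _ hx
    rcases w with w | ⟨w, y⟩
    · have : w = v := hw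
      subst this; exact Or.inl hw2
    · have : v = w := hw.1
      subst this; exact Or.inr ⟨y, hw2⟩
  simp only [Fin.exists_fin_succ, Fin.forall_fin_succ, Fin.sum_univ_three] at *
  have a := h1 (.inl v)
  have b := h1 (.inr (v, 0))
  have c := h1 (.inr (v, 1))
  have d := h1 (.inr (v, 2))
  have k0 := key.1
  have k1 := key.2.1
  have k2 := key.2.2.1
  simp at k0 k1 k2
  omega

theorem lower_s12 {n : ℕ} (f : Fin (3 * n) ⊕ Fin (3 * n) × Fin 3 → ℤ)
    (hf : IsMRDF (corona (⊤ : SimpleGraph (Fin (3 * n))) (⊤ : SimpleGraph (Fin 3))) f) :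
    -(n : ℤ) ≤ ∑ v, f v := by
  have hc := cluster_ge f hf
  have h2 := hf.2.1
  rw [good_card] at h2
  rw [weight_eq]
  have e1 : ∑ v : Fin (3 * n), (if 1 ≤ ∑ u, f (.inl u) + ∑ y, f (.inr (v, y)) then 1 else 0)
      ≤ 3 * n := by
    refine (Finset.sum_le_sum (g := fun _ => 1) fun i _ => ?_).trans (by simp)
    split_ifs <;> simp
  have e2 : (2 : ℤ) * (∑ v : Fin (3 * n),
      (if 1 ≤ f (.inl v) + ∑ y, f (.inr (v, y)) then 3 else 0 : ℕ) : ℕ) - 9 * n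
      ≤ 3 * ∑ v, (f (.inl v) + ∑ y, f (.inr (v, y))) := by
    have : (9 * n : ℤ) = ∑ v : Fin (3 * n), (3 : ℤ) := by simp; ring
    rw [this]
    push_cast
    rw [Finset.mul_sum, Finset.mul_sum, ← Finset.sum_sub_distrib]
    refine Finset.sum_le_sum fun v _ => ?_
    have := hc v
    split_ifs <;> omega
  have e3 : Fintype.card (Fin (3 * n) ⊕ Fin (3 * n) × Fin 3) = 12 * n := by
    simp; ring
  rw [e3] at h2
  omega

theorem sum_ite (n : ℕ) (a b : ℤ) :
    ∑ v : Fin (3 * n), (if (v : ℕ) < n then a else b) = n * a + 2 * n * b := by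
  rw [Fin.sum_univ_eq_sum_range (fun i => if i < n then a else b),
    show 3 * n = n + 2 * n by ring, Finset.sum_range_add]
  rw [Finset.sum_congr rfl (g := fun _ => a) (fun i hi => if_pos (Finset.mem_range.1 hi))]
  simp

/-- The extremal function. -/
def extremal (n : ℕ) : Fin (3 * n) ⊕ Fin (3 * n) × Fin 3 → ℤ
  | .inl _ => 2
  | .inr (v, x) => if (v : ℕ) < n ∧ x = 0 then 1 else -1

theorem ext_tri (n : ℕ) (v : Fin (3 * n)) :
    ∑ y, extremal n (.inr (v, y)) = if (v : ℕ) < n then -1 else -3 := by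
  by_cases h : (v : ℕ) < n <;> simp [extremal, Fin.sum_univ_three, h]

theorem ext_weight (n : ℕ) : ∑ v, extremal n v = -n := by
  rw [weight_eq, Finset.sum_add_distrib]
  simp only [ext_tri, sum_ite]
  simp [extremal]
  ring

theorem ext_mrdf (n : ℕ) (hn : 1 ≤ n) :
    IsMRDF (corona (⊤ : SimpleGraph (Fin (3 * n))) (⊤ : SimpleGraph (Fin 3))) (extremal n) := by
  refine ⟨?_, ?_, ?_⟩
  · rintro (v | ⟨v, x⟩)
    · simp [extremal]
    · simp only [extremal]; split_ifs <;> simp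
  · rw [good_card]
    have hs : ∑ u, extremal n (.inl u) = 6 * n := by simp [extremal]; ring
    have e1 : ∀ v : Fin (3 * n),
        (if 1 ≤ ∑ u, extremal n (.inl u) + ∑ y, extremal n (.inr (v, y)) then 1 else 0) = 1 := by
      intro v
      rw [hs, ext_tri, if_pos]
      split_ifs <;> omega
    have e2 : ∀ v : Fin (3 * n),
        (if 1 ≤ extremal n (.inl v) + ∑ y, extremal n (.inr (v, y)) then 3 else 0)
          = if (v : ℕ) < n then 3 else 0 := by
      intro v
      rw [ext_tri]
      by_cases h : (v : ℕ) < n <;> simp [extremal, h]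
    rw [Finset.sum_congr rfl fun v _ => e1 v, Finset.sum_congr rfl fun v _ => e2 v]
    have e3 := sum_ite n 3 0
    have e4 : (∑ v : Fin (3 * n), if (v : ℕ) < n then 3 else 0) = n * 3 := by
      zify; simpa using e3
    rw [e4]
    simp
    omega
  · rintro (v | ⟨v, x⟩) h
    · simp [extremal] at h
    · exact ⟨.inl v, rfl, rfl⟩

end MRD

/-- For `n ≥ 1`, the corona `K_{3n} ∘ K_3` satisfies `γ_MR(K_{3n} ∘ K_3) = -n`. -/
theorem mrdNum_corona_K3n_K3 (n : ℕ) (hn : 1 ≤ n) :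
    MRD.mrdNum (MRD.corona (⊤ : SimpleGraph (Fin (3 * n))) (⊤ : SimpleGraph (Fin 3))) = -n := by
  refine IsLeast.csInf_eq ⟨⟨MRD.extremal n, MRD.ext_mrdf n hn, (MRD.ext_weight n).symm⟩, ?_⟩
  rintro w ⟨f, hf, rfl⟩
  exact MRD.lower_s12 f hf
end

section
/- Let G be a finite simple graph of order n ≥ 1 and let H be a connected graph of order m with minimum degree δ(H) ≥ 2. Then (2 − m)·n + 2·⌊n/m⌋ ≤ γ_MR(G ∘ H). -/
open Finset

namespace MRD

open scoped Classical in
lemma closed_inr {α β : Type*} [Fintype α] [Fintype β]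
    (G : SimpleGraph α) (H : SimpleGraph β) [DecidableRel H.Adj]
    (f : α ⊕ α × β → ℤ) (v : α) (x : β) :
    closedNbhdSum (corona G H) f (.inr (v, x)) =
      f (.inl v) + ∑ y ∈ Finset.univ.filter (fun y => H.Adj x y ∨ y = x), f (.inr (v, y)) := by
  unfold closedNbhdSum
  rw [Finset.sum_filter, Fintype.sum_sum_type, Fintype.sum_prod_type, Finset.sum_filter]
  congr 1
  · rw [Finset.sum_eq_single v]
    · simp [corona]
    · intro b _ hb
      simp [corona, hb]
    · simp
  · rw [Finset.sum_eq_single v]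
    · simp [corona]
    · intro b _ hb
      apply Finset.sum_eq_zero
      intro y _
      simp [corona, hb, Ne.symm hb]
    · simp

open scoped Classical in
lemma nbhd_card {β : Type*} [Fintype β] (H : SimpleGraph β) [DecidableRel H.Adj]
    (hδ : 2 ≤ H.minDegree) (x : β) :
    3 ≤ (Finset.univ.filter (fun y => H.Adj x y ∨ y = x)).card := by
  have h : Finset.univ.filter (fun y => H.Adj x y ∨ y = x) = insert x (H.neighborFinset x) := by
    ext y
    simp [or_comm]
  rw [h, Finset.card_insert_of_notMem (by simp), SimpleGraph.card_neighborFinset_eq_degree]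
  have := H.minDegree_le_degree x
  omega

open scoped Classical in
lemma block {α β : Type*} [Fintype α] [Fintype β]
    (G : SimpleGraph α) (H : SimpleGraph β) [DecidableRel H.Adj] [Nonempty β]
    (hδ : 2 ≤ H.minDegree) (f : α ⊕ α × β → ℤ) (hf : IsMRDF (corona G H) f) (v : α) :
    (2 - (Fintype.card β : ℤ)) +
      (if ∃ x, 1 ≤ closedNbhdSum (corona G H) f (.inr (v, x)) then 2 else 0)
      ≤ f (.inl v) + ∑ x, f (.inr (v, x)) := by
  obtain ⟨h1, -, h3⟩ := hf
  have hS : ∑ x, (f (.inr (v, x)) + 1) = ∑ x, f (.inr (v, x)) + Fintype.card β := by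
    simp [Finset.sum_add_distrib]
  have hnn : ∀ x : β, 0 ≤ f (.inr (v, x)) + 1 := fun x => by
    rcases h1 (.inr (v, x)) with h | h | h <;> omega
  have hsub : ∀ s : Finset β, ∑ x ∈ s, (f (.inr (v, x)) + 1) ≤ ∑ x, (f (.inr (v, x)) + 1) :=
    fun s => Finset.sum_le_sum_of_subset_of_nonneg (Finset.subset_univ s) (fun x _ _ => hnn x)
  have hc := h1 (.inl v)
  obtain ⟨x0⟩ := ‹Nonempty β›
  split_ifs with hg
  · obtain ⟨x, hx⟩ := hg
    rw [closed_inr] at hx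
    have h5 := hsub (Finset.univ.filter (fun y => H.Adj x y ∨ y = x))
    have h6 := nbhd_card H hδ x
    rw [Finset.sum_add_distrib] at h5
    simp only [Finset.sum_const, nsmul_eq_mul, mul_one] at h5
    omega
  · by_cases hc2 : f (.inl v) = 2
    · have := hsub ∅
      simp only [Finset.sum_empty] at this
      omega
    · by_cases hall : ∃ x, f (.inr (v, x)) = -1
      · obtain ⟨x, hx⟩ := hall
        obtain ⟨w, hw, hw2⟩ := h3 _ hx
        rcases w with u | ⟨u, y⟩
        · have : u = v := hw
          subst this
          exact absurd hw2 hc2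
        · have : v = u := hw.1
          subst this
          have := hsub {y}
          rw [Finset.sum_singleton] at this
          omega
      · push Not at hall
        have h5 : ∑ x : β, (2 : ℤ) ≤ ∑ x, (f (.inr (v, x)) + 1) :=
          Finset.sum_le_sum fun x _ => by
            have := hall x
            rcases h1 (.inr (v, x)) with h | h | h <;> omega
        have h6 := (nbhd_card H hδ x0).trans (Finset.card_le_univ _)
        simp only [Finset.sum_const, Finset.card_univ, nsmul_eq_mul] at h5
        omega

open scoped Classical in
lemma count {α β : Type*} [Fintype α] [Fintype β] (p : α ⊕ α × β → Prop) :
    (Finset.univ.filter p).card ≤ Fintype.card α +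
      Fintype.card β * (Finset.univ.filter (fun v => ∃ x, p (.inr (v, x)))).card := by
  have h : Finset.univ.filter p ⊆
      (Finset.univ.disjSum
        ((Finset.univ.filter (fun v => ∃ x, p (.inr (v, x)))) ×ˢ (Finset.univ : Finset β))) := by
    rintro (v | ⟨v, x⟩) hp
    · simp
    · simp at hp ⊢
      exact ⟨x, hp⟩
  refine (Finset.card_le_card h).trans ?_
  rw [Finset.card_disjSum, Finset.card_product, Finset.card_univ, Finset.card_univ, mul_comm]

end MRD

/-- Let `G` have order `n ≥ 1` and let `H` be connected of order `m` with `δ(H) ≥ 2`.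
Then `(2 - m)·n + 2·⌊n/m⌋ ≤ γ_MR(G ∘ H)`. -/
theorem mrdNum_corona_lower {α β : Type*} [Fintype α] [Fintype β]
    (G : SimpleGraph α) (H : SimpleGraph β) [DecidableRel H.Adj]
    (hn : 1 ≤ Fintype.card α) (hH : H.Connected) (hδ : 2 ≤ H.minDegree) :
    (2 - (Fintype.card β : ℤ)) * Fintype.card α
        + 2 * ⌊(Fintype.card α : ℚ) / Fintype.card β⌋
      ≤ MRD.mrdNum (MRD.corona G H) := by
  classical
  have hne : Nonempty β := hH.nonempty
  have hm : 3 ≤ Fintype.card β :=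
    (MRD.nbhd_card H hδ hne.some).trans (Finset.card_le_univ _)
  unfold MRD.mrdNum
  apply le_csInf
  · refine ⟨_, fun _ => 2, ⟨fun _ => by simp, ?_, fun u hu => by simp at hu⟩, rfl⟩
    have : ∀ v, 1 ≤ MRD.closedNbhdSum (MRD.corona G H) (fun _ => (2 : ℤ)) v := by
      intro v
      unfold MRD.closedNbhdSum
      rw [Finset.sum_const, nsmul_eq_mul]
      have h : ∀ k : ℕ, 0 < k → (1 : ℤ) ≤ k * 2 := fun k hk => by omega
      exact h _ (Finset.card_pos.mpr ⟨v, by simp⟩)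
    rw [Finset.filter_true_of_mem (fun v _ => this v), Finset.card_univ]
    omega
  · rintro w ⟨f, hf, rfl⟩
    have hb := Finset.sum_le_sum (s := Finset.univ) fun v _ => MRD.block G H hδ f hf v
    have hcnt := MRD.count (fun z => 1 ≤ MRD.closedNbhdSum (MRD.corona G H) f z)
    have hhalf : Fintype.card (α ⊕ α × β) ≤ 2 * (Fintype.card α + Fintype.card β *
        (Finset.univ.filter
          (fun v => ∃ x, 1 ≤ MRD.closedNbhdSum (MRD.corona G H) f (.inr (v, x)))).card) := by
      refine hf.2.1.trans (Nat.mul_le_mul_left 2 ?_)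
      convert hcnt
    rw [Fintype.sum_sum_type, Fintype.sum_prod_type, ← Finset.sum_add_distrib]
    refine le_trans ?_ hb
    rw [Finset.sum_add_distrib, ← Finset.sum_filter]
    simp only [Finset.sum_const, nsmul_eq_mul, Finset.card_univ]
    set B := (Finset.univ.filter
      (fun v => ∃ x, 1 ≤ MRD.closedNbhdSum (MRD.corona G H) f (.inr (v, x)))).card with hB
    rw [Fintype.card_sum, Fintype.card_prod] at hhalf
    have key : Fintype.card α ≤ B * Fintype.card β := by
      have h1 : Fintype.card α * 3 ≤ Fintype.card α * Fintype.card β := Nat.mul_le_mul_left _ hm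
      have h2 : B * Fintype.card β = Fintype.card β * B := mul_comm _ _
      have h3 := hhalf
      omega
    have hfl : ⌊(Fintype.card α : ℚ) / Fintype.card β⌋ ≤ (B : ℤ) := by
      have h0 : (0 : ℚ) < Fintype.card β := by exact_mod_cast (by omega : 0 < Fintype.card β)
      have : (Fintype.card α : ℚ) / Fintype.card β ≤ ((B : ℤ) : ℚ) := by
        rw [div_le_iff₀ h0]
        exact_mod_cast key
      exact_mod_cast (Int.floor_le _).trans this
    linarith
end
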